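/- Let (Ω, 𝒜, μ) be a σ-finite measure space, 1 ≤ p < ∞, and T₁,…,T_d a commuting family of positive Dunford–Schwartz operators. Then for every f ∈ L^p(μ) and every sequence n(k) ∈ ℕ^d with n(k) → ∞ that remains in a sector of ℕ^d, the averages A_{n(k)}(f) converge almost uniformly as k → ∞ to some f̂ ∈ L^p(μ). -/

import Mathlib

open MeasureTheory Filter Set ENNReal Topology

variable {Ω : Type*} [MeasurableSpace Ω]

/-- `f` belongs to `L¹(μ) + L^∞(μ)`. -/
def MemL1pLinf (μ : Measure Ω) (f : Ω →ₘ[μ] ℝ) : Prop :=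
  ∃ g h : Ω →ₘ[μ] ℝ, eLpNorm g 1 μ ≠ ∞ ∧ eLpNorm h ⊤ μ ≠ ∞ ∧ f = g + h

/-- A positive Dunford–Schwartz operator: linear and positive on `L¹+L^∞`,
contracting both the `L¹`- and `L^∞`-norms. -/
structure IsPosDS (μ : Measure Ω) (T : (Ω →ₘ[μ] ℝ) → (Ω →ₘ[μ] ℝ)) : Prop where
  map_add : ∀ f g, MemL1pLinf μ f → MemL1pLinf μ g → T (f + g) = T f + T g
  map_smul : ∀ (c : ℝ) (f), MemL1pLinf μ f → T (c • f) = c • T f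
  map_pos : ∀ f, MemL1pLinf μ f → 0 ≤ f → 0 ≤ T f
  norm_one : ∀ f, MemL1pLinf μ f → eLpNorm (T f) 1 μ ≤ eLpNorm f 1 μ
  norm_top : ∀ f, MemL1pLinf μ f → eLpNorm (T f) ⊤ μ ≤ eLpNorm f ⊤ μ

/-- The Cesàro averages `A_n(f) = (1/n) ∑_{k<n} T^k f`. -/
noncomputable def cesaro (μ : Measure Ω) (T : (Ω →ₘ[μ] ℝ) → (Ω →ₘ[μ] ℝ)) (n : ℕ)
    (f : Ω →ₘ[μ] ℝ) : Ω →ₘ[μ] ℝ :=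
  (n : ℝ)⁻¹ • ∑ k ∈ Finset.range n, T^[k] f

/-- Almost uniform convergence of a net `F` to `f`. -/
def AuTendsto {ι : Type*} (μ : Measure Ω) (l : Filter ι) (F : ι → Ω →ₘ[μ] ℝ)
    (f : Ω →ₘ[μ] ℝ) : Prop :=
  ∀ ε : ℝ, 0 < ε → ∃ E : Set Ω, MeasurableSet E ∧ μ Eᶜ ≤ ENNReal.ofReal ε ∧
    Tendsto (fun i => eLpNorm (E.indicator (⇑(F i - f))) ⊤ μ) l (𝓝 0)

/-- `R_μ`: elements of `L¹+L^∞` whose distribution tails are finite. -/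
def MemRmu (μ : Measure Ω) (f : Ω →ₘ[μ] ℝ) : Prop :=
  MemL1pLinf μ f ∧ ∀ lam : ℝ, 0 < lam → μ {ω | lam < |f ω|} < ∞

/-- `T₁^{k₁} ∘ ⋯ ∘ T_d^{k_d}` for a family `T` of operators. -/
def iterComp {E : Type*} {d : ℕ} (T : Fin d → E → E) (k : Fin d → ℕ) : E → E :=
  (List.ofFn fun i => (T i)^[k i]).foldr (· ∘ ·) id

/-- The multiparameter averages
`A_n(f) = (n₁⋯n_d)⁻¹ ∑_{i₁<n₁} ⋯ ∑_{i_d<n_d} T₁^{i₁}⋯T_d^{i_d} f`. -/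
noncomputable def multiAvg (μ : Measure Ω) {d : ℕ}
    (T : Fin d → (Ω →ₘ[μ] ℝ) → (Ω →ₘ[μ] ℝ)) (n : Fin d → ℕ)
    (f : Ω →ₘ[μ] ℝ) : Ω →ₘ[μ] ℝ :=
  (∏ i, (n i : ℝ))⁻¹ •
    ∑ k ∈ Fintype.piFinset (fun i => Finset.range (n i)), iterComp T k f

/-- A sequence `n(k) ∈ ℕ^d` remains in a sector of `ℕ^d`. -/
def InSector {d : ℕ} (n : ℕ → Fin d → ℕ) : Prop :=
  ∃ c₀ : ℝ, ∀ k, ∀ i j, n k j ≠ 0 → (n k i : ℝ) / (n k j : ℝ) ≤ c₀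

namespace DSAux
open Polynomial

def NN (p : ℝ[X]) : Prop := ∀ n, 0 ≤ p.coeff n

lemma NN.add {p q : ℝ[X]} (hp : NN p) (hq : NN q) : NN (p + q) := fun n => by
  rw [coeff_add]; exact add_nonneg (hp n) (hq n)

lemma NN.mul {p q : ℝ[X]} (hp : NN p) (hq : NN q) : NN (p * q) := fun n => by
  rw [coeff_mul]; exact Finset.sum_nonneg fun i _ => mul_nonneg (hp _) (hq _)

lemma NN.one : NN (1 : ℝ[X]) := fun n => by
  rw [coeff_one]; split_ifs <;> norm_num

lemma NN.natCast (m : ℕ) : NN (m : ℝ[X]) := by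
  induction m with
  | zero => intro n; simp
  | succ m ih => push_cast; exact ih.add NN.one

lemma NN.C {c : ℝ} (hc : 0 ≤ c) : NN (C c) := fun n => by
  rw [coeff_C]; split_ifs <;> simp [hc]

lemma NN.pow {p : ℝ[X]} (hp : NN p) (j : ℕ) : NN (p ^ j) := by
  induction j with
  | zero => simpa using NN.one
  | succ j ih => rw [pow_succ]; exact ih.mul hp

lemma NN.sum {ι : Type*} {s : Finset ι} {p : ι → ℝ[X]} (hp : ∀ i ∈ s, NN (p i)) :
    NN (∑ i ∈ s, p i) := fun n => by
  rw [finsetSum_coeff]; exact Finset.sum_nonneg fun i hi => hp i hi n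

lemma NN.X_pow (k : ℕ) : NN (X ^ k : ℝ[X]) := fun n => by
  rw [coeff_X_pow]; split_ifs <;> norm_num

noncomputable def om (k : ℕ) : ℝ[X] := C ((2 : ℝ) ^ k)⁻¹ * ∑ n ∈ Finset.range (2 ^ k), X ^ n

noncomputable def vv (r : ℝ) (M : ℕ) : ℝ[X] := ∑ k ∈ Finset.range M, C ((1 - r) * r ^ k) * om k

lemma NN_om (k : ℕ) : NN (om k) :=
  (NN.C (by positivity)).mul (NN.sum fun _ _ => NN.X_pow _)

lemma NN_vv {r : ℝ} (h0 : 0 ≤ r) (h1 : r ≤ 1) (M : ℕ) : NN (vv r M) :=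
  NN.sum fun k _ => (NN.C (mul_nonneg (by linarith) (by positivity))).mul (NN_om k)

lemma NN_binom {w a : ℝ[X]} (hw : NN w) (ha : NN a) (j : ℕ) :
    NN ((w + a) ^ (j + 1) - (w ^ (j + 1) + ((j + 1 : ℕ) : ℝ[X]) * a * w ^ j)) := by
  induction j with
  | zero => intro n; simp
  | succ j ih =>
    have : (w + a) ^ (j + 1 + 1) - (w ^ (j + 1 + 1) + ((j + 1 + 1 : ℕ) : ℝ[X]) * a * w ^ (j + 1))
      = (w + a) * ((w + a) ^ (j + 1) - (w ^ (j + 1) + ((j + 1 : ℕ) : ℝ[X]) * a * w ^ j))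
        + ((j + 1 : ℕ) : ℝ[X]) * (a * a * w ^ j) := by
      push_cast; ring
    rw [this]
    exact ((hw.add ha).mul ih).add ((NN.natCast _).mul ((ha.mul ha).mul (hw.pow _)))

lemma coeff_om_mul (K n : ℕ) (hn : n < 2 ^ K) (q : ℝ[X]) :
    (om K * q).coeff n = ((2 : ℝ) ^ K)⁻¹ * ∑ s ∈ Finset.range (n + 1), q.coeff s := by
  rw [om, mul_assoc, coeff_C_mul, mul_comm _ q, coeff_mul,
    Finset.Nat.sum_antidiagonal_eq_sum_range_succ_mk]
  congr 1
  refine Finset.sum_congr rfl fun s hs => ?_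
  have : (∑ n ∈ Finset.range (2 ^ K), (X : ℝ[X]) ^ n).coeff (n - s) = 1 := by
    rw [finsetSum_coeff]
    simp only [coeff_X_pow]
    rw [Finset.sum_ite_eq, if_pos]
    rw [Finset.mem_range]; omega
  simp only [this, mul_one]

lemma markov_poly {q : ℝ[X]} (hq : NN q) (n : ℕ) :
    q.eval 1 - (derivative q).eval 1 / (n + 1) ≤ ∑ s ∈ Finset.range (n + 1), q.coeff s := by
  set L := max (n + 1) (q.natDegree + 1) with hL
  have h1 : q.eval 1 = ∑ s ∈ Finset.range L, q.coeff s := by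
    rw [eval_eq_sum_range' (n := L) (by omega)]; simp
  have h2 : (derivative q).eval 1 = ∑ s ∈ Finset.range L, q.coeff s * s := by
    rw [derivative_eval, sum_over_range' _ (by simp) L (by omega)]; simp
  have h3 : (derivative q).eval 1 / (n + 1) = ∑ s ∈ Finset.range L, q.coeff s * s / (n + 1) := by
    rw [h2, Finset.sum_div]
  rw [h3, h1, ← Finset.sum_sub_distrib]
  have hsub : Finset.range (n + 1) ⊆ Finset.range L := Finset.range_mono (by omega)
  rw [← Finset.sum_sdiff hsub]
  have hpos : (0 : ℝ) < n + 1 := by positivity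
  have : ∑ s ∈ Finset.range L \ Finset.range (n + 1), (q.coeff s - q.coeff s * s / (n + 1)) ≤ 0 := by
    refine Finset.sum_nonpos fun s hs => ?_
    have hs' : n + 1 ≤ s := by
      simp only [Finset.mem_sdiff, Finset.mem_range] at hs; omega
    have hs'' : (n + 1 : ℝ) ≤ s := by exact_mod_cast hs'
    rw [sub_nonpos, le_div_iff₀ hpos]
    exact mul_le_mul_of_nonneg_left hs'' (hq s)
  have h4 : ∑ s ∈ Finset.range (n + 1), (q.coeff s - q.coeff s * s / (n + 1))
      ≤ ∑ s ∈ Finset.range (n + 1), q.coeff s := by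
    refine Finset.sum_le_sum fun s _ => ?_
    have := hq s
    have : 0 ≤ q.coeff s * s / (n + 1) := by positivity
    linarith
  linarith

lemma om_eval (k : ℕ) : (om k).eval 1 = 1 := by
  simp [om, eval_finsetSum]

lemma om_deriv (k : ℕ) : (derivative (om k)).eval 1 ≤ 2 ^ k / 2 := by
  have h : ∀ m : ℕ, (derivative (∑ n ∈ Finset.range m, (X : ℝ[X]) ^ n)).eval 1 ≤ (m : ℝ) * m / 2 := by
    intro m
    induction m with
    | zero => simp
    | succ m ih =>
      rw [Finset.sum_range_succ, derivative_add, eval_add]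
      have : (derivative ((X : ℝ[X]) ^ m)).eval 1 = m := by simp [derivative_X_pow]
      rw [this]; push_cast; nlinarith
  rw [om, derivative_C_mul, eval_C_mul]
  have := h (2 ^ k)
  push_cast at this
  have h2 : (0 : ℝ) < 2 ^ k := by positivity
  calc _ ≤ ((2 : ℝ) ^ k)⁻¹ * (2 ^ k * 2 ^ k / 2) := by gcongr
    _ = _ := by field_simp

lemma vv_eval (r : ℝ) (K : ℕ) : (vv r K).eval 1 = 1 - r ^ K := by
  induction K with
  | zero => simp [vv]
  | succ K ih =>
    rw [vv, Finset.sum_range_succ, ← vv, eval_add, ih, eval_C_mul, om_eval]; ring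

lemma vv_deriv {r : ℝ} (h0 : 3 / 4 ≤ r) (h1 : r ≤ 1) (K : ℕ) :
    (derivative (vv r K)).eval 1 ≤ (2 * r) ^ K / 4 := by
  induction K with
  | zero => simp [vv]
  | succ K ih =>
    rw [vv, Finset.sum_range_succ, ← vv, derivative_add, eval_add, derivative_C_mul, eval_C_mul]
    have h2 : (1 - r) * r ^ K * (derivative (om K)).eval 1 ≤ (1 - r) * r ^ K * (2 ^ K / 2) :=
      mul_le_mul_of_nonneg_left (om_deriv K)
        (mul_nonneg (by linarith) (pow_nonneg (by linarith) _))
    have h3 : (1 - r) * r ^ K * (2 ^ K / 2) = (1 - r) / 2 * (2 * r) ^ K := by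
      rw [mul_pow]; ring
    have h4 : (0 : ℝ) ≤ (2 * r) ^ K := pow_nonneg (by linarith) _
    rw [pow_succ]
    nlinarith

lemma vv_deriv_nonneg {q : ℝ[X]} (hq : NN q) : 0 ≤ (derivative q).eval 1 := by
  rw [derivative_eval]
  simp only [one_pow, mul_one]
  exact Finset.sum_nonneg fun s _ => mul_nonneg (hq s) (by positivity)

lemma coeff_vv_pow {r : ℝ} (h0 : 3 / 4 ≤ r) (h1 : r < 1) (M n j : ℕ) (hM : n.size < M)
    (hj : j * r ^ n.size ≤ 1 / 3) :
    1 / 2 * (j + 1) * (1 - r) * (r / 2) ^ n.size ≤ (vv r M ^ (j + 1)).coeff n := by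
  set K := n.size with hK
  set w := vv r K with hw
  set a := C ((1 - r) * r ^ K) * om K with ha
  set b := ∑ k ∈ Finset.Ico (K + 1) M, C ((1 - r) * r ^ k) * om k with hb
  have hr0 : 0 ≤ r := by linarith
  have hNw : NN w := NN_vv hr0 h1.le K
  have hNa' : ∀ k, NN (C ((1 - r) * r ^ k) * om k) := fun k =>
    (NN.C (mul_nonneg (by linarith) (by positivity))).mul (NN_om k)
  have hNb : NN b := NN.sum fun k _ => hNa' k
  have hNa : NN a := hNa' K
  have hv : vv r M = w + (a + b) := by
    rw [hw, vv, vv, ← Finset.sum_range_add_sum_Ico _ hM.le, hb, ha,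
      Finset.sum_eq_sum_Ico_succ_bot hM]
  have hbin := NN_binom hNw (hNa.add hNb) j n
  rw [← hv, coeff_sub, coeff_add] at hbin
  have e1 : ((j + 1 : ℕ) : ℝ[X]) * (a + b) * w ^ j
      = ((j + 1 : ℕ) : ℝ[X]) * (a * w ^ j) + ((j + 1 : ℕ) : ℝ[X]) * (b * w ^ j) := by ring
  have e2 := hNw.pow (j + 1) n
  have e3 := ((NN.natCast (j + 1)).mul (hNb.mul (hNw.pow j))) n
  rw [e1, coeff_add] at hbin
  have e4 : (((j + 1 : ℕ) : ℝ[X]) * (a * w ^ j)).coeff n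
      = (j + 1) * ((1 - r) * r ^ K * (((2 : ℝ) ^ K)⁻¹ *
        ∑ s ∈ Finset.range (n + 1), (w ^ j).coeff s)) := by
    rw [← C_eq_natCast, coeff_C_mul, ha, mul_assoc, coeff_C_mul, coeff_om_mul K n (Nat.lt_size_self n)]
    push_cast; ring
  have e5 : (1 : ℝ) / 2 ≤ ∑ s ∈ Finset.range (n + 1), (w ^ j).coeff s := by
    refine le_trans ?_ (markov_poly (hNw.pow j) n)
    have hrK : 0 ≤ r ^ K := by positivity
    have hrK1 : r ^ K ≤ 1 := pow_le_one₀ hr0 h1.le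
    have f1 : (w ^ j).eval 1 = (1 - r ^ K) ^ j := by rw [eval_pow, vv_eval]
    have f2 : 1 - j * r ^ K ≤ (1 - r ^ K) ^ j := by
      have := one_add_mul_le_pow (a := - r ^ K) (by linarith) j
      calc 1 - j * r ^ K = 1 + j * (- r ^ K) := by ring
        _ ≤ _ := this
        _ = _ := by ring
    have f3 : (derivative (w ^ j)).eval 1 ≤ j * ((2 * r) ^ K / 4) := by
      rw [derivative_pow, eval_mul, eval_mul, eval_pow, eval_C, vv_eval]
      have g1 : (1 - r ^ K) ^ (j - 1) ≤ 1 := pow_le_one₀ (by linarith) (by linarith)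
      have g2 := vv_deriv h0 h1.le K
      have g3 : 0 ≤ (derivative w).eval 1 := vv_deriv_nonneg hNw
      have g4 : 0 ≤ (1 - r ^ K) ^ (j - 1) := pow_nonneg (by linarith) _
      calc (j : ℝ) * (1 - r ^ K) ^ (j - 1) * (derivative w).eval 1
          ≤ (j : ℝ) * 1 * ((2 * r) ^ K / 4) := by gcongr
        _ = _ := by ring
    have f4 : (2 : ℝ) ^ K ≤ 2 * (n + 1) := by
      have : 2 ^ K ≤ 2 * (n + 1) := by
        rcases Nat.eq_zero_or_pos K with h | h
        · rw [h]; omega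
        · obtain ⟨k, hk⟩ := Nat.exists_eq_succ_of_ne_zero h.ne'
          have : 2 ^ k ≤ n := Nat.lt_size.1 (by omega)
          rw [hk, Nat.succ_eq_add_one, pow_succ]; omega
      exact_mod_cast this
    have f5 : (derivative (w ^ j)).eval 1 / (n + 1) ≤ j * r ^ K / 2 := by
      rw [div_le_iff₀ (by positivity)]
      refine f3.trans ?_
      rw [mul_pow]
      have : 0 ≤ j * r ^ K := by positivity
      nlinarith
    rw [f1]; linarith
  have e6 : (1 / 2 * (j + 1) * (1 - r) * (r / 2) ^ K : ℝ)
      ≤ (((j + 1 : ℕ) : ℝ[X]) * (a * w ^ j)).coeff n := by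
    rw [e4]
    have : 0 ≤ 1 - r := by linarith
    calc (1 / 2 * (j + 1) * (1 - r) * (r / 2) ^ K : ℝ)
        = (j + 1) * ((1 - r) * r ^ K * (((2 : ℝ) ^ K)⁻¹ * (1 / 2))) := by
          rw [div_pow]; ring
      _ ≤ _ := by gcongr
  linarith

lemma sum_pow_lower (d J : ℕ) :
    (J : ℝ) ^ (d + 1) / (d + 1) ≤ ∑ j ∈ Finset.range J, ((j : ℝ) + 1) ^ d := by
  induction J with
  | zero => simp
  | succ J ih =>
    rw [Finset.sum_range_succ]
    have hb := one_add_mul_le_pow (a := - (1 / ((J : ℝ) + 1))) (by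
      have : 1 / ((J : ℝ) + 1) ≤ 1 := by rw [div_le_one (by positivity)]; linarith [J.cast_nonneg (α := ℝ)]
      linarith) (d + 1)
    have hJ : (0 : ℝ) < J + 1 := by positivity
    have h1 : 1 + -(1 / ((J : ℝ) + 1)) = J / (J + 1) := by field_simp; ring
    rw [h1, div_pow, le_div_iff₀ (by positivity)] at hb
    have h2 : (1 + ((d + 1 : ℕ) : ℝ) * -(1 / ((J : ℝ) + 1))) * ((J : ℝ) + 1) ^ (d + 1)
        = ((J : ℝ) + 1) ^ (d + 1) - (d + 1) * ((J : ℝ) + 1) ^ d := by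
      push_cast; field_simp; ring
    rw [h2] at hb
    push_cast
    rw [div_le_iff₀ (by positivity)] at *
    nlinarith

noncomputable def cst (r : ℝ) (d : ℕ) : ℝ := (1 / 2 * (1 - r)) ^ d * (1 / 3) ^ (d + 1) / (d + 1)

lemma cst_pos {r : ℝ} (h : r < 1) (d : ℕ) : 0 < cst r d := by
  have : 0 < 1 - r := by linarith
  unfold cst; positivity

lemma coeff_lower {r : ℝ} (h0 : 3 / 4 ≤ r) (h1 : r < 1) {d : ℕ} (hd : 0 < d)
    (hrd : 1 / 2 ≤ r ^ d) (M K : ℕ) (hKM : K < M) (x : Fin d → ℕ) (hx : ∀ i, x i < 2 ^ K) :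
    cst r d * (r ^ K)⁻¹ * (((2 : ℝ) ^ K) ^ d)⁻¹ ≤
      ∑ j ∈ Finset.range (⌊(r ^ K)⁻¹ / 3⌋₊ + 1), ∏ i, (vv r M ^ (j + 1)).coeff (x i) := by
  have : Nonempty (Fin d) := ⟨⟨0, hd⟩⟩
  obtain ⟨i0, hi0⟩ := Finite.exists_min (fun i => (x i).size)
  set m := (x i0).size with hm
  have hr0 : 0 < r := by linarith
  have hsz : ∀ i, (x i).size ≤ K := fun i => Nat.size_le.2 (hx i)
  have hmK : m ≤ K := hsz i0
  set Jm := ⌊(r ^ m)⁻¹ / 3⌋₊ + 1 with hJm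
  have hmono : (r ^ m)⁻¹ ≤ (r ^ K)⁻¹ :=
    inv_anti₀ (by positivity) (pow_le_pow_of_le_one hr0.le h1.le hmK)
  have hJ : Jm ≤ ⌊(r ^ K)⁻¹ / 3⌋₊ + 1 := by
    rw [hJm]; gcongr
  have hcn : ∀ j i, 0 ≤ (vv r M ^ (j + 1)).coeff (x i) := fun j i =>
    (NN_vv hr0.le h1.le M).pow _ _
  have s1 : ∑ j ∈ Finset.range Jm, ∏ i, (vv r M ^ (j + 1)).coeff (x i) ≤
      ∑ j ∈ Finset.range (⌊(r ^ K)⁻¹ / 3⌋₊ + 1), ∏ i, (vv r M ^ (j + 1)).coeff (x i) :=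
    Finset.sum_le_sum_of_subset_of_nonneg (Finset.range_mono hJ)
      fun j _ _ => Finset.prod_nonneg fun i _ => hcn j i
  refine le_trans ?_ s1
  have s2 : ∀ j ∈ Finset.range Jm, ((j : ℝ) + 1) ^ d * ((1 / 2 * (1 - r)) ^ d *
      ∏ i, (r / 2) ^ (x i).size) ≤ ∏ i, (vv r M ^ (j + 1)).coeff (x i) := by
    intro j hj
    have : ∏ i, (1 / 2 * ((j : ℝ) + 1) * (1 - r) * (r / 2) ^ (x i).size)
      = ((j : ℝ) + 1) ^ d * ((1 / 2 * (1 - r)) ^ d * ∏ i, (r / 2) ^ (x i).size) := by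
      rw [Finset.prod_mul_distrib, Finset.prod_const, Finset.card_univ, Fintype.card_fin,
        ← mul_assoc, ← mul_pow]
      congr 2; ring
    rw [← this]
    refine Finset.prod_le_prod (fun i _ => ?_) fun i _ => ?_
    · have : 0 ≤ 1 - r := by linarith
      positivity
    · refine coeff_vv_pow h0 h1 M (x i) j (lt_of_le_of_lt (hsz i) hKM) ?_
      have hj' : j ≤ ⌊(r ^ m)⁻¹ / 3⌋₊ := by
        rw [Finset.mem_range] at hj; omega
      have hj2 : (j : ℝ) ≤ (r ^ m)⁻¹ / 3 :=
        (Nat.cast_le.2 hj').trans (Nat.floor_le (by positivity))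
      have : r ^ (x i).size ≤ r ^ m := pow_le_pow_of_le_one hr0.le h1.le (hi0 i)
      calc (j : ℝ) * r ^ (x i).size ≤ (r ^ m)⁻¹ / 3 * r ^ m := by gcongr
        _ = 1 / 3 := by field_simp
  refine le_trans ?_ (Finset.sum_le_sum s2)
  rw [← Finset.sum_mul]
  have hJm' : (1 / 3 : ℝ) * (r ^ m)⁻¹ ≤ Jm := by
    rw [hJm]; push_cast
    have := Nat.lt_floor_add_one ((r ^ m)⁻¹ / 3)
    linarith
  have s3 : ((1 / 3 : ℝ) * (r ^ m)⁻¹) ^ (d + 1) / (d + 1) ≤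
      ∑ j ∈ Finset.range Jm, ((j : ℝ) + 1) ^ d := by
    refine le_trans ?_ (sum_pow_lower d Jm)
    gcongr
  have s4 : (r / 2) ^ m * ((r / 2) ^ K) ^ (d - 1) ≤ ∏ i, (r / 2) ^ (x i).size := by
    rw [← Finset.mul_prod_erase Finset.univ _ (Finset.mem_univ i0)]
    have : ((r / 2) ^ K) ^ (d - 1) = ∏ i ∈ Finset.univ.erase i0, (r / 2) ^ K := by
      rw [Finset.prod_const, Finset.card_erase_of_mem (Finset.mem_univ _), Finset.card_univ,
        Fintype.card_fin]
    rw [this]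
    refine mul_le_mul_of_nonneg_left ?_ (by positivity)
    exact Finset.prod_le_prod (fun i _ => by positivity) fun i _ =>
      pow_le_pow_of_le_one (by positivity) (by linarith) (hsz i)
  have h1r : 0 ≤ 1 - r := by linarith
  have s5 : ((1 / 3 : ℝ) * (r ^ m)⁻¹) ^ (d + 1) / (d + 1) * ((1 / 2 * (1 - r)) ^ d *
      ((r / 2) ^ m * ((r / 2) ^ K) ^ (d - 1))) ≤
      (∑ j ∈ Finset.range Jm, ((j : ℝ) + 1) ^ d) * ((1 / 2 * (1 - r)) ^ d *
      ∏ i, (r / 2) ^ (x i).size) := by gcongr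
  refine le_trans ?_ s5
  have s6 : (r ^ K)⁻¹ * (((2 : ℝ) ^ K) ^ d)⁻¹ ≤
      ((r ^ m)⁻¹) ^ (d + 1) * ((r / 2) ^ m * ((r / 2) ^ K) ^ (d - 1)) := by
    obtain ⟨e, rfl⟩ := Nat.exists_eq_succ_of_ne_zero hd.ne'
    obtain ⟨t, ht⟩ := Nat.exists_eq_add_of_le hmK
    have hg : (1 : ℝ) ≤ (2 * r ^ (e + 1)) ^ t := one_le_pow₀ (by
      rw [Nat.succ_eq_add_one] at hrd; linarith)
    have key : ((r ^ m)⁻¹) ^ (e.succ + 1) * ((r / 2) ^ m * ((r / 2) ^ K) ^ (e.succ - 1))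
        = (r ^ K)⁻¹ * (((2 : ℝ) ^ K) ^ e.succ)⁻¹ * (2 * r ^ (e + 1)) ^ t := by
      rw [ht]
      simp only [Nat.succ_eq_add_one, Nat.add_sub_cancel, div_pow, mul_pow, inv_pow]
      field_simp
      ring
    rw [key]
    exact le_mul_of_one_le_right (by positivity) hg
  have : 0 ≤ cst r d := (cst_pos h1 d).le
  calc cst r d * (r ^ K)⁻¹ * (((2 : ℝ) ^ K) ^ d)⁻¹
      = cst r d * ((r ^ K)⁻¹ * (((2 : ℝ) ^ K) ^ d)⁻¹) := by ring
    _ ≤ cst r d * (((r ^ m)⁻¹) ^ (d + 1) * ((r / 2) ^ m * ((r / 2) ^ K) ^ (d - 1))) := by gcongr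
    _ = _ := by rw [cst, mul_pow (1 / 3 : ℝ)]; ring

end DSAux

namespace DSAux

lemma nrm_add {μ : Measure Ω} {p : ℝ≥0∞} (hp : 1 ≤ p) (f g : Ω →ₘ[μ] ℝ) :
    eLpNorm (f + g : Ω →ₘ[μ] ℝ) p μ ≤ eLpNorm f p μ + eLpNorm g p μ := by
  rw [eLpNorm_congr_ae (AEEqFun.coeFn_add f g)]
  exact eLpNorm_add_le f.aestronglyMeasurable g.aestronglyMeasurable hp

lemma nrm_smul {μ : Measure Ω} {p : ℝ≥0∞} (c : ℝ) (f : Ω →ₘ[μ] ℝ) :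
    eLpNorm (c • f : Ω →ₘ[μ] ℝ) p μ = ENNReal.ofReal |c| * eLpNorm f p μ := by
  rw [eLpNorm_congr_ae (AEEqFun.coeFn_smul c f), eLpNorm_const_smul, ← ofReal_norm,
    Real.norm_eq_abs]

lemma nrm_zero {μ : Measure Ω} {p : ℝ≥0∞} :
    eLpNorm (0 : Ω →ₘ[μ] ℝ) p μ = 0 := by
  rw [eLpNorm_congr_ae AEEqFun.coeFn_zero, eLpNorm_zero]

lemma nonneg_iff {μ : Measure Ω} (f : Ω →ₘ[μ] ℝ) : 0 ≤ f ↔ ∀ᵐ x ∂μ, 0 ≤ f x := by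
  rw [← AEEqFun.coeFn_le]
  constructor
  · intro h
    filter_upwards [h, AEEqFun.coeFn_zero (μ := μ) (β := ℝ) (α := Ω)] with x hx hz
    rw [hz] at hx; exact hx
  · intro h
    filter_upwards [h, AEEqFun.coeFn_zero (μ := μ) (β := ℝ) (α := Ω)] with x hx hz
    rw [hz]; exact hx

/-- truncation -/
lemma trunc {μ : Measure Ω} {p : ℝ≥0∞} (hp1 : 1 ≤ p) (hp2 : p ≠ ∞) (f : Ω →ₘ[μ] ℝ)
    {lam : ℝ} (hl : 0 < lam) :
    ∃ a b : Ω →ₘ[μ] ℝ, f = a + b ∧ eLpNorm b ⊤ μ ≤ ENNReal.ofReal lam ∧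
      ENNReal.ofReal lam ^ (p.toReal - 1) * eLpNorm a 1 μ ≤ eLpNorm f p μ ^ p.toReal := by
  have hq : 1 ≤ p.toReal := by
    rw [← ENNReal.toReal_one]; exact ENNReal.toReal_mono hp2 hp1
  set A : Set Ω := {x | lam < |f x|} with hA
  have hfm : StronglyMeasurable f := f.stronglyMeasurable
  have hAm : MeasurableSet A := measurableSet_lt measurable_const hfm.measurable.abs
  have ha : AEStronglyMeasurable (A.indicator f) μ := f.aestronglyMeasurable.indicator hAm
  have hb : AEStronglyMeasurable (Aᶜ.indicator f) μ := f.aestronglyMeasurable.indicator hAm.compl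
  refine ⟨AEEqFun.mk _ ha, AEEqFun.mk _ hb, ?_, ?_, ?_⟩
  · rw [AEEqFun.mk_add_mk]
    simp only [indicator_self_add_compl]
    exact (AEEqFun.mk_coeFn f).symm
  · rw [eLpNorm_congr_ae (AEEqFun.coeFn_mk _ hb), eLpNorm_exponent_top]
    refine eLpNormEssSup_le_of_ae_bound (ae_of_all _ fun x => ?_)
    by_cases hx : x ∈ A
    · rw [indicator_of_notMem (by simpa using hx)]; simpa using hl.le
    · rw [indicator_of_mem hx, Real.norm_eq_abs]; exact not_lt.1 hx
  · have hp0 : p ≠ 0 := (lt_of_lt_of_le zero_lt_one hp1).ne'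
    rw [eLpNorm_congr_ae (AEEqFun.coeFn_mk _ ha), eLpNorm_one_eq_lintegral_enorm,
      eLpNorm_eq_lintegral_rpow_enorm_toReal hp0 hp2, ← ENNReal.rpow_mul,
      one_div_mul_cancel (by linarith), ENNReal.rpow_one, ← lintegral_const_mul' _ _ (by
        exact (ENNReal.rpow_lt_top_of_nonneg (by linarith) ENNReal.ofReal_ne_top).ne)]
    refine lintegral_mono fun x => ?_
    by_cases hx : x ∈ A
    · simp only [indicator_of_mem hx]
      have h1 : ENNReal.ofReal lam ≤ ‖f x‖ₑ := by
        rw [← ofReal_norm]; exact ENNReal.ofReal_le_ofReal (le_of_lt hx)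
      calc ENNReal.ofReal lam ^ (p.toReal - 1) * ‖f x‖ₑ
          ≤ ‖f x‖ₑ ^ (p.toReal - 1) * ‖f x‖ₑ ^ (1 : ℝ) := by
            rw [ENNReal.rpow_one]; gcongr
        _ = ‖f x‖ₑ ^ p.toReal := by
            rw [← ENNReal.rpow_add_of_nonneg _ _ (by linarith) zero_le_one]; congr 1; ring
    · simp [indicator_of_notMem hx]

lemma mem_of_nrm {μ : Measure Ω} {p : ℝ≥0∞} (hp1 : 1 ≤ p) (f : Ω →ₘ[μ] ℝ)
    (hf : eLpNorm f p μ ≠ ∞) : MemL1pLinf μ f := by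
  by_cases hp2 : p = ∞
  · exact ⟨0, f, by simp [nrm_zero], by rwa [hp2] at hf, by simp⟩
  · obtain ⟨a, b, h1, h2, h3⟩ := trunc hp1 hp2 f one_pos
    refine ⟨a, b, ?_, (h2.trans_lt ENNReal.ofReal_lt_top).ne, h1⟩
    simp only [ENNReal.ofReal_one, ENNReal.one_rpow, one_mul] at h3
    exact (h3.trans_lt (ENNReal.rpow_lt_top_of_nonneg ENNReal.toReal_nonneg hf)).ne

def EE (μ : Measure Ω) : Submodule ℝ (Ω →ₘ[μ] ℝ) where
  carrier := {f | MemL1pLinf μ f}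
  add_mem' := by
    rintro _ _ ⟨a, b, ha, hb, rfl⟩ ⟨a', b', ha', hb', rfl⟩
    refine ⟨a + a', b + b', ?_, ?_, by abel⟩
    · exact ((nrm_add le_rfl _ _).trans_lt (ENNReal.add_lt_top.2 ⟨ha.lt_top, ha'.lt_top⟩)).ne
    · exact ((nrm_add le_top _ _).trans_lt (ENNReal.add_lt_top.2 ⟨hb.lt_top, hb'.lt_top⟩)).ne
  zero_mem' := ⟨0, 0, by rw [nrm_zero]; simp, by rw [nrm_zero]; simp, by simp⟩
  smul_mem' := by
    rintro c _ ⟨a, b, ha, hb, rfl⟩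
    refine ⟨c • a, c • b, ?_, ?_, by rw [smul_add]⟩ <;> rw [nrm_smul]
    · exact ENNReal.mul_ne_top ENNReal.ofReal_ne_top ha
    · exact ENNReal.mul_ne_top ENNReal.ofReal_ne_top hb

/-- bundle a function in some `L^p`. -/
lemma exE {μ : Measure Ω} {p : ℝ≥0∞} (hp1 : 1 ≤ p) {f : Ω → ℝ} (hf : MemLp f p μ) :
    ∃ F : EE μ, ((F : Ω →ₘ[μ] ℝ) : Ω → ℝ) =ᵐ[μ] f := by
  refine ⟨⟨AEEqFun.mk f hf.1, mem_of_nrm hp1 _ ?_⟩, AEEqFun.coeFn_mk _ _⟩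
  rw [eLpNorm_congr_ae (AEEqFun.coeFn_mk _ _)]; exact hf.2.ne

lemma E_add {μ : Measure Ω} (f g : EE μ) : ∀ᵐ x ∂μ, (f + g : EE μ).1 x = f.1 x + g.1 x :=
  AEEqFun.coeFn_add f.1 g.1
lemma E_sub {μ : Measure Ω} (f g : EE μ) : ∀ᵐ x ∂μ, (f - g : EE μ).1 x = f.1 x - g.1 x :=
  AEEqFun.coeFn_sub f.1 g.1
lemma E_smul {μ : Measure Ω} (c : ℝ) (g : EE μ) : ∀ᵐ x ∂μ, (c • g : EE μ).1 x = c * g.1 x :=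
  AEEqFun.coeFn_smul c g.1
lemma E_zero {μ : Measure Ω} : ∀ᵐ x ∂μ, (0 : EE μ).1 x = 0 :=
  AEEqFun.coeFn_zero
lemma E_ext {μ : Measure Ω} {f g : EE μ} (h : ∀ᵐ x ∂μ, f.1 x = g.1 x) : f = g :=
  Subtype.ext (AEEqFun.ext h)

noncomputable abbrev nm {μ : Measure Ω} (p : ℝ≥0∞) (f : EE μ) : ℝ≥0∞ := eLpNorm f.1 p μ

lemma nm_top_le {μ : Measure Ω} {f : EE μ} {c : ℝ} (h : ∀ᵐ x ∂μ, |f.1 x| ≤ c) :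
    nm ⊤ f ≤ ENNReal.ofReal c := by
  unfold nm
  rw [eLpNorm_exponent_top]
  exact eLpNormEssSup_le_of_ae_bound h

lemma ae_of_nm_top {μ : Measure Ω} {f : EE μ} {c : ℝ} (hc : 0 ≤ c) (h : nm ⊤ f ≤ ENNReal.ofReal c) :
    ∀ᵐ x ∂μ, |f.1 x| ≤ c := by
  unfold nm at h
  rw [eLpNorm_exponent_top] at h
  filter_upwards [ae_le_eLpNormEssSup (f := f.1) (μ := μ)] with x hx
  have := hx.trans h
  rwa [← ofReal_norm, ENNReal.ofReal_le_ofReal_iff hc] at this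

structure DS {μ : Measure Ω} (S : Module.End ℝ (EE μ)) : Prop where
  pos : ∀ f : EE μ, (∀ᵐ x ∂μ, 0 ≤ f.1 x) → ∀ᵐ x ∂μ, 0 ≤ (S f).1 x
  one : ∀ f : EE μ, nm 1 (S f) ≤ nm 1 f
  top : ∀ f : EE μ, nm ⊤ (S f) ≤ nm ⊤ f

lemma DS.mono {μ : Measure Ω} {S : Module.End ℝ (EE μ)} (hS : DS S) {f g : EE μ}
    (h : ∀ᵐ x ∂μ, f.1 x ≤ g.1 x) : ∀ᵐ x ∂μ, (S f).1 x ≤ (S g).1 x := by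
  have := hS.pos (g - f) (by
    filter_upwards [h, E_sub g f] with x h1 h2; rw [h2]; linarith)
  rw [map_sub] at this
  filter_upwards [this, E_sub (S g) (S f)] with x h1 h2; rw [h2] at h1; linarith

lemma DS.id {μ : Measure Ω} : DS (1 : Module.End ℝ (EE μ)) :=
  ⟨fun _ h => h, fun _ => le_rfl, fun _ => le_rfl⟩

lemma DS.mul {μ : Measure Ω} {S R : Module.End ℝ (EE μ)} (hS : DS S) (hR : DS R) : DS (S * R) :=
  ⟨fun f h => hS.pos _ (hR.pos f h), fun f => (hS.one _).trans (hR.one f),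
    fun f => (hS.top _).trans (hR.top f)⟩

lemma DS.pow {μ : Measure Ω} {S : Module.End ℝ (EE μ)} (hS : DS S) (n : ℕ) : DS (S ^ n) := by
  induction n with
  | zero => simpa using DS.id
  | succ n ih => rw [pow_succ]; exact ih.mul hS

lemma pos_comb {μ : Measure Ω} {ι : Type*} (s : Finset ι) (c : ι → ℝ) (hc : ∀ i ∈ s, 0 ≤ c i)
    (F : ι → EE μ) (hF : ∀ i ∈ s, ∀ᵐ x ∂μ, 0 ≤ (F i).1 x) :
    ∀ᵐ x ∂μ, 0 ≤ (∑ i ∈ s, c i • F i).1 x := by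
  classical
  induction s using Finset.induction_on with
  | empty => simp only [Finset.sum_empty]; filter_upwards [E_zero (μ := μ)] with x hx; rw [hx]
  | insert a s ha ih =>
    rw [Finset.sum_insert ha]
    filter_upwards [ih (fun i hi => hc i (Finset.mem_insert_of_mem hi))
      (fun i hi => hF i (Finset.mem_insert_of_mem hi)), hF a (Finset.mem_insert_self _ _),
      E_add (c a • F a) (∑ i ∈ s, c i • F i), E_smul (c a) (F a)] with x h1 h2 h3 h4
    rw [h3, h4]
    exact add_nonneg (mul_nonneg (hc a (Finset.mem_insert_self _ _)) h2) h1

lemma nm_comb {μ : Measure Ω} {p : ℝ≥0∞} (hp : 1 ≤ p) {ι : Type*} (s : Finset ι) (c : ι → ℝ)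
    (hc : ∀ i ∈ s, 0 ≤ c i) (F : ι → EE μ) (B : ℝ≥0∞) (hF : ∀ i ∈ s, nm p (F i) ≤ B) :
    nm p (∑ i ∈ s, c i • F i) ≤ ENNReal.ofReal (∑ i ∈ s, c i) * B := by
  classical
  induction s using Finset.induction_on with
  | empty => simp only [Finset.sum_empty]; simp [nm, nrm_zero]
  | insert a s ha ih =>
    have h0 : ∀ i ∈ s, 0 ≤ c i := fun i hi => hc i (Finset.mem_insert_of_mem hi)
    have h1 : 0 ≤ c a := hc a (Finset.mem_insert_self _ _)
    rw [Finset.sum_insert ha, Finset.sum_insert ha, ENNReal.ofReal_add h1 (Finset.sum_nonneg h0),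
      add_mul]
    refine (nrm_add hp _ _).trans (add_le_add ?_ (ih h0
      fun i hi => hF i (Finset.mem_insert_of_mem hi)))
    rw [Submodule.coe_smul, nrm_smul, abs_of_nonneg h1]
    gcongr
    exact hF a (Finset.mem_insert_self _ _)

lemma DS.comb {μ : Measure Ω} {ι : Type*} (s : Finset ι) (c : ι → ℝ) (hc : ∀ i ∈ s, 0 ≤ c i)
    (hc1 : ∑ i ∈ s, c i ≤ 1) (S : ι → Module.End ℝ (EE μ)) (hS : ∀ i ∈ s, DS (S i)) :
    DS (∑ i ∈ s, c i • S i) := by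
  have e : ∀ f, (∑ i ∈ s, c i • S i) f = ∑ i ∈ s, c i • (S i f) := fun f => by
    simp [LinearMap.sum_apply]
  have hle : ENNReal.ofReal (∑ i ∈ s, c i) ≤ 1 := by
    rw [← ENNReal.ofReal_one]; exact ENNReal.ofReal_le_ofReal hc1
  refine ⟨fun f hf => ?_, fun f => ?_, fun f => ?_⟩
  · rw [e]; exact pos_comb s c hc _ fun i hi => (hS i hi).pos f hf
  · rw [e]
    refine (nm_comb le_rfl s c hc _ _ fun i hi => (hS i hi).one f).trans ?_
    exact (mul_le_mul_left hle _).trans_eq (one_mul _)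
  · rw [e]
    refine (nm_comb le_top s c hc _ _ fun i hi => (hS i hi).top f).trans ?_
    exact (mul_le_mul_left hle _).trans_eq (one_mul _)

lemma tangent {q a u : ℝ} (hq : 1 ≤ q) (ha : 0 ≤ a) (hu : 0 ≤ u) :
    q * a ^ (q - 1) * u - (q - 1) * a ^ q ≤ u ^ q := by
  rcases ha.eq_or_lt with rfl | ha
  · rcases hq.eq_or_lt with rfl | hq
    · simp
    · rw [Real.zero_rpow (by linarith), Real.zero_rpow (by linarith)]
      simp; positivity
  · have h := one_add_mul_self_le_rpow_one_add (s := u / a - 1) (by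
      have : 0 ≤ u / a := by positivity
      linarith) hq
    have e : 1 + (u / a - 1) = u / a := by ring
    rw [e, Real.div_rpow hu ha.le, le_div_iff₀ (by positivity)] at h
    have e2 : a ^ q = a ^ (q - 1) * a := by
      nth_rewrite 3 [← Real.rpow_one a]
      rw [← Real.rpow_add ha]; congr 1; ring
    refine le_trans (le_of_eq ?_) h
    rw [e2]; field_simp; ring

lemma DS.abs_le {μ : Measure Ω} {S : Module.End ℝ (EE μ)} (hS : DS S) {f u : EE μ}
    (h : ∀ᵐ x ∂μ, |f.1 x| ≤ u.1 x) : ∀ᵐ x ∂μ, |(S f).1 x| ≤ (S u).1 x := by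
  have h1 := hS.mono (f := f) (g := u) (by filter_upwards [h] with x hx; exact (le_abs_self _).trans hx)
  have h2 := hS.mono (f := (-1 : ℝ) • f) (g := u) (by
    filter_upwards [h, E_smul (-1) f] with x hx h3
    rw [h3]; have := neg_abs_le (f.1 x); linarith)
  rw [map_smul] at h2
  filter_upwards [h1, h2, E_smul (-1) (S f)] with x h1 h2 h3
  rw [h3] at h2
  exact _root_.abs_le.2 ⟨by linarith, h1⟩

lemma DS.Lp {μ : Measure Ω} {S : Module.End ℝ (EE μ)} (hS : DS S) {p : ℝ≥0∞}
    (hp1 : 1 ≤ p) (hp2 : p ≠ ∞) (f : EE μ) (hf : nm p f ≠ ∞) : nm p (S f) ≤ nm p f := by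
  have hp0 : p ≠ 0 := (lt_of_lt_of_le zero_lt_one hp1).ne'
  set q := p.toReal with hqdef
  have hq : 1 ≤ q := by
    rw [← ENNReal.toReal_one]; exact ENNReal.toReal_mono hp2 hp1
  have hfL : MemLp f.1 p μ := ⟨f.1.aestronglyMeasurable, hf.lt_top⟩
  have hqL : MemLp (fun x => |f.1 x| ^ q) 1 μ := by
    have := (hfL.norm_rpow hp0 hp2)
    simpa [Real.norm_eq_abs] using this
  obtain ⟨u, hu⟩ := exE hp1 hfL.abs
  obtain ⟨w, hw⟩ := exE le_rfl hqL
  obtain ⟨e, he⟩ := exE (p := ⊤) le_top (memLp_top_const (1 : ℝ) (μ := μ))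
  have hSe : ∀ᵐ x ∂μ, |(S e).1 x| ≤ 1 :=
    ae_of_nm_top zero_le_one ((hS.top e).trans (nm_top_le (by
      filter_upwards [he] with x hx; rw [hx]; simp)))
  have hrat : ∀ a : ℝ, ∀ᵐ x ∂μ,
      q * |a| ^ (q - 1) * (S u).1 x - (q - 1) * |a| ^ q ≤ (S w).1 x := by
    intro a
    have h1 := hS.mono (f := (q * |a| ^ (q - 1)) • u - ((q - 1) * |a| ^ q) • e) (g := w) (by
      filter_upwards [hu, hw, he, E_sub ((q * |a| ^ (q - 1)) • u) (((q - 1) * |a| ^ q) • e),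
        E_smul (q * |a| ^ (q - 1)) u, E_smul ((q - 1) * |a| ^ q) e] with x h1 h2 h3 h4 h5 h6
      rw [h4, h5, h6, h1, h2, h3]
      have := tangent hq (abs_nonneg a) (abs_nonneg (f.1 x))
      simpa using this)
    rw [map_sub, map_smul, map_smul] at h1
    filter_upwards [h1, hSe, E_sub ((q * |a| ^ (q - 1)) • S u) (((q - 1) * |a| ^ q) • S e),
        E_smul (q * |a| ^ (q - 1)) (S u), E_smul ((q - 1) * |a| ^ q) (S e)] with x h1 h2 h4 h5 h6
    rw [h4, h5, h6] at h1
    have h7 : (S e).1 x ≤ 1 := (le_abs_self _).trans h2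
    have h8 : 0 ≤ (q - 1) * |a| ^ q := mul_nonneg (by linarith) (by positivity)
    have := mul_le_mul_of_nonneg_left h7 h8
    linarith
  have hall : ∀ᵐ x ∂μ, ∀ a : ℚ,
      q * |(a : ℝ)| ^ (q - 1) * (S u).1 x - (q - 1) * |(a : ℝ)| ^ q ≤ (S w).1 x :=
    ae_all_iff.2 fun a => hrat a
  have habs := hS.abs_le (f := f) (u := u) (by filter_upwards [hu] with x hx; rw [hx]; rfl)
  have key : ∀ᵐ x ∂μ, |(S f).1 x| ^ q ≤ (S w).1 x := by
    filter_upwards [hall, habs] with x h1 h2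
    have hcont : Continuous fun a : ℝ =>
        q * |a| ^ (q - 1) * (S u).1 x - (q - 1) * |a| ^ q := by
      have c1 : Continuous fun a : ℝ => |a| ^ (q - 1) :=
        continuous_abs.rpow_const fun _ => Or.inr (by linarith)
      have c2 : Continuous fun a : ℝ => |a| ^ q :=
        continuous_abs.rpow_const fun _ => Or.inr (by linarith)
      exact ((continuous_const.mul c1).mul continuous_const).sub (continuous_const.mul c2)
    have hcl : IsClosed {a : ℝ | q * |a| ^ (q - 1) * (S u).1 x - (q - 1) * |a| ^ q ≤ (S w).1 x} :=
      isClosed_le hcont continuous_const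
    have hA := hcl.closure_subset_iff.2 (show Set.range ((↑) : ℚ → ℝ) ⊆ _ by
      rintro _ ⟨a, rfl⟩; exact h1 a)
    rw [Rat.denseRange_cast.closure_range] at hA
    have h3 := hA (Set.mem_univ ((S u).1 x))
    simp only [mem_ofPred_eq] at h3
    have h0 : 0 ≤ (S u).1 x := (abs_nonneg _).trans h2
    rw [abs_of_nonneg h0] at h3
    have e2 : (S u).1 x ^ (q - 1) * (S u).1 x = (S u).1 x ^ q := by
      rcases h0.eq_or_lt with h | h
      · rw [← h, Real.zero_rpow (by linarith : q ≠ 0), mul_zero]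
      · nth_rewrite 2 [← Real.rpow_one ((S u).1 x)]
        rw [← Real.rpow_add h]; congr 1; ring
    rw [mul_assoc, e2] at h3
    calc |(S f).1 x| ^ q ≤ (S u).1 x ^ q := by gcongr
      _ ≤ _ := by linarith
  have hle : ∫⁻ x, ‖(S f).1 x‖ₑ ^ q ∂μ ≤ ∫⁻ x, ‖f.1 x‖ₑ ^ q ∂μ := by
    have e1 : ∀ y : ℝ, ‖y‖ₑ ^ q = ENNReal.ofReal (|y| ^ q) := fun y => by
      rw [← ofReal_norm, ENNReal.ofReal_rpow_of_nonneg (norm_nonneg _) (by linarith),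
        Real.norm_eq_abs]
    calc ∫⁻ x, ‖(S f).1 x‖ₑ ^ q ∂μ ≤ ∫⁻ x, ‖(S w).1 x‖ₑ ∂μ := by
          refine lintegral_mono_ae ?_
          filter_upwards [key] with x hx
          rw [e1, ← ofReal_norm]
          exact ENNReal.ofReal_le_ofReal (hx.trans (le_abs_self _))
      _ = nm 1 (S w) := by rw [nm, eLpNorm_one_eq_lintegral_enorm]
      _ ≤ nm 1 w := hS.one w
      _ = ∫⁻ x, ‖w.1 x‖ₑ ∂μ := by rw [nm, eLpNorm_one_eq_lintegral_enorm]
      _ = ∫⁻ x, ‖f.1 x‖ₑ ^ q ∂μ := by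
          refine lintegral_congr_ae ?_
          filter_upwards [hw] with x hx
          rw [hx, e1, ← ofReal_norm, Real.norm_eq_abs, abs_of_nonneg (by positivity)]
  rw [nm, nm, eLpNorm_eq_lintegral_rpow_enorm_toReal hp0 hp2,
    eLpNorm_eq_lintegral_rpow_enorm_toReal hp0 hp2]
  exact ENNReal.rpow_le_rpow hle (by positivity)

end DSAux

namespace DSAux

lemma nm_one {μ : Measure Ω} (f : EE μ) : nm 1 f = ∫⁻ x, ‖f.1 x‖ₑ ∂μ := by
  rw [nm, eLpNorm_one_eq_lintegral_enorm]

lemma ex_abs {μ : Measure Ω} {p : ℝ≥0∞} (hp : 1 ≤ p) (f : EE μ) (hf : nm p f ≠ ∞) :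
    ∃ u : EE μ, (∀ᵐ x ∂μ, u.1 x = |f.1 x|) ∧ nm p u = nm p f := by
  have hfL : MemLp f.1 p μ := ⟨f.1.aestronglyMeasurable, hf.lt_top⟩
  obtain ⟨u, hu⟩ := exE hp hfL.abs
  refine ⟨u, hu, ?_⟩
  rw [nm, nm]
  refine eLpNorm_congr_norm_ae ?_
  filter_upwards [hu] with x hx
  rw [hx]; simp

lemma ex_pos {μ : Measure Ω} (f : EE μ) (hf : nm 1 f ≠ ∞) :
    ∃ u : EE μ, (∀ᵐ x ∂μ, u.1 x = max (f.1 x) 0) ∧ nm 1 u ≠ ∞ := by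
  have hfL : MemLp f.1 1 μ := ⟨f.1.aestronglyMeasurable, hf.lt_top⟩
  have h2 : MemLp (fun x => max (f.1 x) 0) 1 μ := hfL.pos_part
  obtain ⟨u, hu⟩ := exE le_rfl h2
  refine ⟨u, hu, ?_⟩
  rw [nm, eLpNorm_congr_ae hu]
  exact h2.2.ne

lemma hopf_aux {μ : Measure Ω} {U : Module.End ℝ (EE μ)} (hU : DS U) (g : EE μ)
    (hg : nm 1 g ≠ ∞) (N : ℕ) :
    ∃ A B : EE μ, nm 1 A ≠ ∞ ∧ nm 1 B ≠ ∞ ∧ (∀ᵐ x ∂μ, 0 ≤ A.1 x) ∧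
      (∀ᵐ x ∂μ, A.1 x ≤ B.1 x) ∧ (∀ᵐ x ∂μ, B.1 x = max (g.1 x + (U A).1 x) 0) ∧
      ∀ n ≤ N, ∀ᵐ x ∂μ, ((∑ j ∈ Finset.range n, U ^ j) g).1 x ≤ A.1 x := by
  have step : ∀ A : EE μ, nm 1 A ≠ ∞ → ∃ B : EE μ, nm 1 B ≠ ∞ ∧
      (∀ᵐ x ∂μ, B.1 x = max (g.1 x + (U A).1 x) 0) := by
    intro A hA
    obtain ⟨B, h1, h2⟩ := ex_pos (g + U A) (by
      refine ((nrm_add le_rfl _ _).trans_lt (ENNReal.add_lt_top.2 ⟨hg.lt_top, ?_⟩)).ne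
      exact (hU.one A).trans_lt hA.lt_top)
    refine ⟨B, h2, ?_⟩
    filter_upwards [h1, E_add g (U A)] with x h1 h2
    rw [h1, h2]
  induction N with
  | zero =>
    have h0 : nm 1 (0 : EE μ) ≠ ∞ := by
      rw [nm, Submodule.coe_zero, nrm_zero]; simp
    obtain ⟨B, h1, h2⟩ := step 0 h0
    refine ⟨0, B, h0, h1, ?_, ?_, h2, ?_⟩
    · filter_upwards [E_zero (μ := μ)] with x hx; rw [hx]
    · filter_upwards [E_zero (μ := μ), h2] with x hx h2; rw [hx, h2]; exact le_max_right _ _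
    · intro n hn
      obtain rfl : n = 0 := by omega
      simp
  | succ N ih =>
    obtain ⟨A, B, hA, hB, h0, hAB, hBe, hn⟩ := ih
    obtain ⟨B', h1, h2⟩ := step B hB
    refine ⟨B, B', hB, h1, ?_, ?_, h2, ?_⟩
    · filter_upwards [h0, hAB] with x h1 h2; exact h1.trans h2
    · filter_upwards [hBe, h2, hU.mono hAB] with x h1 h2 h3
      rw [h1, h2]; gcongr
    · intro n hnN
      rcases n with _ | n
      · filter_upwards [E_zero (μ := μ), h0, hAB] with x hx h1 h2
        simp only [Finset.range_zero, Finset.sum_empty, LinearMap.zero_apply]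
        rw [hx]; exact h1.trans h2
      · have e : (∑ j ∈ Finset.range (n + 1), U ^ j) g
            = U ((∑ j ∈ Finset.range n, U ^ j) g) + g := by
          rw [geom_sum_succ]; rfl
        rw [e]
        filter_upwards [hU.mono (hn n (by omega)), E_add (U ((∑ j ∈ Finset.range n, U ^ j) g)) g, hBe]
          with x h1 h2 h3
        rw [h2, h3]
        refine le_trans ?_ (le_max_left _ _)
        linarith

lemma hopf {μ : Measure Ω} [SigmaFinite μ] {U : Module.End ℝ (EE μ)} (hU : DS U) (f : EE μ)
    (hf0 : ∀ᵐ x ∂μ, 0 ≤ f.1 x) (hf : nm 1 f ≠ ∞) {lam : ℝ} (hl : 0 < lam) (N : ℕ) :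
    ENNReal.ofReal lam *
      μ {x | ∃ n < N, (n + 1) * lam < ((∑ j ∈ Finset.range (n + 1), U ^ j) f).1 x} ≤ nm 1 f := by
  set D := {x | ∃ n < N, (n + 1) * lam < ((∑ j ∈ Finset.range (n + 1), U ^ j) f).1 x} with hD
  have hDm : MeasurableSet D := by
    have : D = ⋃ n, ⋃ (_ : n < N),
        {x | (n + 1) * lam < ((∑ j ∈ Finset.range (n + 1), U ^ j) f).1 x} := by
      ext x; simp [hD]
    rw [this]
    exact MeasurableSet.iUnion fun n => MeasurableSet.iUnion fun _ =>
      measurableSet_lt measurable_const (AEEqFun.stronglyMeasurable _).measurable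
  have main : ∀ F ⊆ D, MeasurableSet F → μ F < ∞ → ENNReal.ofReal lam * μ F ≤ nm 1 f := by
    intro F hFD hFm hF
    have hFL1 : MemLp (F.indicator fun _ => (1 : ℝ)) 1 μ := memLp_indicator_const 1 hFm 1 (Or.inr hF.ne)
    obtain ⟨e, he⟩ := exE le_rfl hFL1
    have he1 : nm 1 e ≠ ∞ := by rw [nm, eLpNorm_congr_ae he]; exact hFL1.2.ne
    have het : nm ⊤ e ≤ 1 := by
      rw [← ENNReal.ofReal_one]
      refine nm_top_le ?_
      filter_upwards [he] with x hx
      rw [hx]; by_cases h : x ∈ F <;> simp [h]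
    have hGe : ∀ n : ℕ, ∀ᵐ x ∂μ, |((∑ j ∈ Finset.range n, U ^ j) e).1 x| ≤ n := by
      intro n
      refine ae_of_nm_top (by positivity) ?_
      have := nm_comb (μ := μ) (p := ⊤) le_top (Finset.range n) (fun _ => (1 : ℝ))
        (fun _ _ => zero_le_one) (fun j => (U ^ j) e) 1 (fun j _ => ((hU.pow j).top e).trans het)
      simpa [LinearMap.sum_apply] using this
    set g := f - lam • e with hg
    have hg1 : nm 1 g ≠ ∞ := by
      have : g = f + (-lam) • e := by rw [hg]; module
      rw [this]
      refine ((nrm_add le_rfl _ _).trans_lt (ENNReal.add_lt_top.2 ⟨hf.lt_top, ?_⟩)).ne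
      rw [Submodule.coe_smul, nrm_smul]
      exact ENNReal.mul_lt_top ENNReal.ofReal_lt_top he1.lt_top
    obtain ⟨A, B, hA, hB, hA0, hAB, hBe, hn⟩ := hopf_aux hU g hg1 N
    have hDB : ∀ᵐ x ∂μ, x ∈ D → 0 < B.1 x := by
      have h1 : ∀ᵐ x ∂μ, ∀ n : ℕ, n < N →
          ((∑ j ∈ Finset.range (n + 1), U ^ j) g).1 x ≤ A.1 x := by
        rw [ae_all_iff]; intro n
        by_cases h : n < N
        · filter_upwards [hn (n + 1) h] with x hx _; exact hx
        · exact ae_of_all _ fun x h' => absurd h' h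
      have h2 : ∀ᵐ x ∂μ, ∀ n : ℕ, ((∑ j ∈ Finset.range (n + 1), U ^ j) g).1 x
          = ((∑ j ∈ Finset.range (n + 1), U ^ j) f).1 x
            - lam * ((∑ j ∈ Finset.range (n + 1), U ^ j) e).1 x := by
        rw [ae_all_iff]; intro n
        rw [hg, map_sub, map_smul]
        filter_upwards [E_sub ((∑ j ∈ Finset.range (n + 1), U ^ j) f)
          (lam • (∑ j ∈ Finset.range (n + 1), U ^ j) e),
          E_smul lam ((∑ j ∈ Finset.range (n + 1), U ^ j) e)] with x h1 h2
        rw [h1, h2]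
      filter_upwards [h1, h2, hAB, ae_all_iff.2 hGe] with x h1 h2 h3 h4
      rintro ⟨n, hnN, hx⟩
      have h5 := h1 n hnN
      rw [h2 n] at h5
      have h6 := (le_abs_self _).trans (h4 (n + 1))
      rw [Nat.cast_add, Nat.cast_one] at h6
      have h7 := mul_le_mul_of_nonneg_left h6 hl.le
      linarith
    have hpt : ∀ᵐ x ∂μ, F.indicator (fun _ => ENNReal.ofReal lam) x + ‖B.1 x‖ₑ
        ≤ ‖f.1 x‖ₑ + ‖(U A).1 x‖ₑ := by
      filter_upwards [hDB, hBe, hf0, hU.pos A hA0, he, E_sub f (lam • e), E_smul lam e]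
        with x h1 h2 h3 h4 h5 h6 h7
      have hB0 : 0 ≤ B.1 x := by rw [h2]; exact le_max_right _ _
      have hgx : g.1 x = f.1 x - lam * F.indicator (fun _ => (1 : ℝ)) x := by
        rw [hg, h6, h7, h5]
      rw [Real.enorm_eq_ofReal hB0, Real.enorm_eq_ofReal h3, Real.enorm_eq_ofReal h4,
        ← ENNReal.ofReal_add h3 h4]
      by_cases hx : x ∈ F
      · have hpos := h1 (hFD hx)
        simp only [indicator_of_mem hx, mul_one] at hgx ⊢
        rw [← ENNReal.ofReal_add hl.le hB0]
        refine ENNReal.ofReal_le_ofReal ?_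
        rw [h2] at hpos ⊢
        rw [max_eq_left (by
          rcases lt_max_iff.1 hpos with h | h
          · exact h.le
          · exact absurd h (lt_irrefl _))]
        linarith
      · simp only [indicator_of_notMem hx, mul_zero, sub_zero, zero_add] at hgx ⊢
        refine ENNReal.ofReal_le_ofReal ?_
        rw [h2, hgx]
        exact max_le le_rfl (by linarith)
    have hint := lintegral_mono_ae hpt
    rw [lintegral_add_left (measurable_const.indicator hFm),
      lintegral_add_left (f.1.stronglyMeasurable.enorm), lintegral_indicator_const hFm,
      ← nm_one, ← nm_one, ← nm_one] at hint
    have h1 : nm 1 (U A) ≤ nm 1 B := by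
      refine (hU.one A).trans ?_
      rw [nm, nm]
      refine eLpNorm_mono_ae ?_
      filter_upwards [hA0, hAB] with x h1 h2
      rw [Real.norm_of_nonneg h1, Real.norm_of_nonneg (h1.trans h2)]; exact h2
    exact (ENNReal.add_le_add_iff_right hB).1 (hint.trans (add_le_add le_rfl h1))
  by_contra hcon
  rw [not_le] at hcon
  have hl0 : ENNReal.ofReal lam ≠ 0 := by simpa using hl
  have h1 : nm 1 f / ENNReal.ofReal lam < μ D := by
    rw [ENNReal.div_lt_iff (Or.inl hl0) (Or.inl ENNReal.ofReal_ne_top), mul_comm]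
    exact hcon
  obtain ⟨F, hFm, hFD, h2, h3⟩ := Measure.exists_subset_measure_lt_top hDm h1
  have h4 := main F hFD hFm h3
  rw [ENNReal.div_lt_iff (Or.inl hl0) (Or.inl ENNReal.ofReal_ne_top), mul_comm] at h2
  exact absurd h4 (not_le.2 h2)

end DSAux

namespace DSAux

noncomputable def AV {R : Type*} [CommRing R] [Algebra ℝ R] {d : ℕ} (t : Fin d → R)
    (n : Fin d → ℕ) : R :=
  ∏ i, ((n i : ℝ)⁻¹ • ∑ m ∈ Finset.range (n i), t i ^ m)

lemma AV_eq {R : Type*} [CommRing R] [Algebra ℝ R] {d : ℕ} (t : Fin d → R) (n : Fin d → ℕ) :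
    AV t n = (∏ i, (n i : ℝ))⁻¹ •
      ∑ k ∈ Fintype.piFinset (fun i => Finset.range (n i)), ∏ i, t i ^ k i := by
  rw [AV, Finset.prod_smul, Finset.prod_univ_sum, Finset.prod_inv_distrib]

lemma DS.prod {μ : Measure Ω} {R : Type*} [CommRing R] [Algebra ℝ R]
    (φ : R →ₐ[ℝ] Module.End ℝ (EE μ)) {ι : Type*} (s : Finset ι) (a : ι → R)
    (ha : ∀ i ∈ s, DS (φ (a i))) : DS (φ (∏ i ∈ s, a i)) := by
  refine Finset.prod_induction a (fun a => DS (φ a)) ?_ ?_ ha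
  · intro a b ha hb; rw [map_mul]; exact ha.mul hb
  · rw [map_one]; exact DS.id

lemma DS.avg {μ : Measure Ω} {S : Module.End ℝ (EE μ)} (hS : DS S) (n : ℕ) :
    DS ((n : ℝ)⁻¹ • ∑ m ∈ Finset.range n, S ^ m) := by
  rw [Finset.smul_sum]
  refine DS.comb _ (fun _ => (n : ℝ)⁻¹) (fun _ _ => by positivity) ?_ _ fun m _ => hS.pow m
  rw [Finset.sum_const, Finset.card_range, nsmul_eq_mul]
  exact mul_inv_le_one

lemma DS.AV {μ : Measure Ω} {R : Type*} [CommRing R] [Algebra ℝ R]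
    (φ : R →ₐ[ℝ] Module.End ℝ (EE μ)) {d : ℕ} (t : Fin d → R) (ht : ∀ i, DS (φ (t i)))
    (n : Fin d → ℕ) : DS (φ (AV t n)) := by
  refine DS.prod φ _ _ fun i _ => ?_
  rw [map_smul, map_sum]
  simp only [map_pow]
  exact (ht i).avg _

lemma DS.vv {μ : Measure Ω} {S : Module.End ℝ (EE μ)} (hS : DS S) {r : ℝ} (h0 : 0 ≤ r)
    (h1 : r ≤ 1) (M : ℕ) : DS (Polynomial.aeval S (vv r M)) := by
  rw [Polynomial.aeval_eq_sum_range]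
  refine DS.comb _ _ (fun i _ => NN_vv h0 h1 M i) ?_ _ fun m _ => hS.pow m
  have := vv_eval r M
  rw [Polynomial.eval_eq_sum_range] at this
  simp only [one_pow, mul_one] at this
  rw [this]
  have : 0 ≤ r ^ M := by positivity
  linarith

lemma dominate_alg {R : Type*} [CommRing R] [Algebra ℝ R] {d : ℕ} (hd : 0 < d) (t : Fin d → R)
    {r : ℝ} (h0 : 3 / 4 ≤ r) (h1 : r < 1) (hrd : 1 / 2 ≤ r ^ d) (M K : ℕ) (hKM : K < M) :
    ∃ (s : Finset (Fin d → ℕ)) (w : (Fin d → ℕ) → ℝ), (∀ x ∈ s, 0 ≤ w x) ∧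
      ∑ j ∈ Finset.range (⌊(r ^ K)⁻¹ / 3⌋₊ + 1),
          (∏ i, Polynomial.aeval (t i) (vv r M)) ^ (j + 1)
        = (cst r d * (r ^ K)⁻¹) • AV t (fun _ => 2 ^ K) + ∑ x ∈ s, w x • ∏ i, t i ^ x i := by
  classical
  set J := ⌊(r ^ K)⁻¹ / 3⌋₊ with hJ
  set L := 2 ^ K + (J + 1) * (vv r M).natDegree + 1 with hL
  have hr0 : 0 ≤ r := by linarith
  set cube : Finset (Fin d → ℕ) := Fintype.piFinset fun _ => Finset.range (2 ^ K) with hcube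
  set big : Finset (Fin d → ℕ) := Fintype.piFinset fun _ => Finset.range L with hbig
  have hsub : cube ⊆ big := Fintype.piFinset_subset _ _ fun _ => Finset.range_mono (by omega)
  set W : (Fin d → ℕ) → ℝ := fun x =>
    ∑ j ∈ Finset.range (J + 1), ∏ i, (vv r M ^ (j + 1)).coeff (x i) with hW
  set k0 := cst r d * (r ^ K)⁻¹ * (((2 : ℝ) ^ K) ^ d)⁻¹ with hk0
  have hWn : ∀ x, 0 ≤ W x := fun x => Finset.sum_nonneg fun j _ => Finset.prod_nonneg fun i _ =>
    (NN_vv hr0 h1.le M).pow _ _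
  refine ⟨big, fun x => W x - if x ∈ cube then k0 else 0, ?_, ?_⟩
  · intro x _
    by_cases hx : x ∈ cube
    · simp only [if_pos hx]
      have := coeff_lower h0 h1 hd hrd M K hKM x (fun i => by
        rw [hcube, Fintype.mem_piFinset] at hx; exact Finset.mem_range.1 (hx i))
      exact sub_nonneg.2 this
    · simp only [if_neg hx, sub_zero]; exact hWn x
  · have e1 : ∀ j ∈ Finset.range (J + 1), (∏ i, Polynomial.aeval (t i) (vv r M)) ^ (j + 1)
        = ∑ x ∈ big, (∏ i, (vv r M ^ (j + 1)).coeff (x i)) • ∏ i, t i ^ x i := by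
      intro j hj
      rw [← Finset.prod_pow]
      have : ∀ i, Polynomial.aeval (t i) (vv r M) ^ (j + 1)
          = ∑ m ∈ Finset.range L, (vv r M ^ (j + 1)).coeff m • t i ^ m := by
        intro i
        rw [← map_pow]
        refine Polynomial.aeval_eq_sum_range' ?_ _
        have h2 : (vv r M ^ (j + 1)).natDegree ≤ (j + 1) * (vv r M).natDegree :=
          Polynomial.natDegree_pow_le
        have h3 : (j + 1) * (vv r M).natDegree ≤ (J + 1) * (vv r M).natDegree :=
          Nat.mul_le_mul_right _ (by rw [Finset.mem_range] at hj; omega)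
        exact Nat.lt_succ_of_le (h2.trans (h3.trans (Nat.le_add_left _ _)))
      simp only [this]
      rw [Finset.prod_univ_sum]
      refine Finset.sum_congr rfl fun x _ => ?_
      rw [Finset.prod_smul]
    rw [Finset.sum_congr rfl e1, Finset.sum_comm]
    have e2 : (cst r d * (r ^ K)⁻¹) • AV t (fun _ => 2 ^ K)
        = ∑ x ∈ big, (if x ∈ cube then k0 else 0) • ∏ i, t i ^ x i := by
      rw [AV_eq, smul_smul, Finset.smul_sum]
      simp only [ite_smul, zero_smul]
      rw [Finset.sum_ite_mem, Finset.inter_eq_right.2 hsub]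
      refine Finset.sum_congr rfl fun x _ => ?_
      congr 1
      rw [hk0]; simp
    rw [e2, ← Finset.sum_add_distrib]
    refine Finset.sum_congr rfl fun x _ => ?_
    rw [← Finset.sum_smul, ← add_smul]
    congr 1
    ring

lemma dominate {μ : Measure Ω} {R : Type*} [CommRing R] [Algebra ℝ R]
    (φ : R →ₐ[ℝ] Module.End ℝ (EE μ)) {d : ℕ} (hd : 0 < d) (t : Fin d → R)
    (ht : ∀ i, DS (φ (t i)))
    {r : ℝ} (h0 : 3 / 4 ≤ r) (h1 : r < 1) (hrd : 1 / 2 ≤ r ^ d) (M K : ℕ) (hKM : K < M)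
    (f : EE μ) (hf0 : ∀ᵐ x ∂μ, 0 ≤ f.1 x) :
    ∀ᵐ x ∂μ, cst r d * (r ^ K)⁻¹ * (φ (AV t fun _ => 2 ^ K) f).1 x ≤
      ((∑ j ∈ Finset.range (⌊(r ^ K)⁻¹ / 3⌋₊ + 1 + 1),
        φ (∏ i, Polynomial.aeval (t i) (vv r M)) ^ j) f).1 x := by
  obtain ⟨s, w, hw, he⟩ := dominate_alg hd t h0 h1 hrd M K hKM
  set U := ∏ i, Polynomial.aeval (t i) (vv r M) with hU
  set J := ⌊(r ^ K)⁻¹ / 3⌋₊ with hJ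
  have e1 : (∑ j ∈ Finset.range (J + 1 + 1), φ U ^ j) f
      = (cst r d * (r ^ K)⁻¹) • (φ (AV t fun _ => 2 ^ K) f) +
        ((∑ x ∈ s, w x • φ (∏ i, t i ^ x i) f) + f) := by
    have := congrArg (fun z => φ z f) he
    simp only [map_sum, map_add, map_smul, map_pow φ U, LinearMap.add_apply, LinearMap.sum_apply, LinearMap.smul_apply] at this
    rw [Finset.sum_range_succ', LinearMap.add_apply, LinearMap.sum_apply, this, pow_zero,
      Module.End.one_apply, add_assoc]
  rw [e1]
  have hp := pos_comb s w hw (fun x => φ (∏ i, t i ^ x i) f) (fun x _ =>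
    (DS.prod φ _ _ fun i _ => by rw [map_pow]; exact (ht i).pow _).pos f hf0)
  filter_upwards [hp, hf0, E_add ((cst r d * (r ^ K)⁻¹) • (φ (AV t fun _ => 2 ^ K) f))
    ((∑ x ∈ s, w x • φ (∏ i, t i ^ x i) f) + f),
    E_add (∑ x ∈ s, w x • φ (∏ i, t i ^ x i) f) f,
    E_smul (cst r d * (r ^ K)⁻¹) (φ (AV t fun _ => 2 ^ K) f)] with x a1 a2 a3 a4 a5
  rw [a3, a4, a5]
  linarith

lemma dyadic {μ : Measure Ω} [SigmaFinite μ] {R : Type*} [CommRing R] [Algebra ℝ R]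
    (φ : R →ₐ[ℝ] Module.End ℝ (EE μ)) {d : ℕ} (hd : 0 < d) (t : Fin d → R)
    (ht : ∀ i, DS (φ (t i))) : ∃ C : ℝ, 0 < C ∧ ∀ (M : ℕ) (f : EE μ),
    (∀ᵐ x ∂μ, 0 ≤ f.1 x) → nm 1 f ≠ ∞ → ∀ lam : ℝ, 0 < lam →
    ENNReal.ofReal (C * lam) * μ {x | ∃ K < M, lam < (φ (AV t fun _ => 2 ^ K) f).1 x} ≤ nm 1 f := by
  obtain ⟨r, h0, h1, hrd⟩ : ∃ r : ℝ, 3 / 4 ≤ r ∧ r < 1 ∧ 1 / 2 ≤ r ^ d := by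
    have hd' : (1 : ℝ) ≤ d := by exact_mod_cast hd
    have hq : 1 / (4 * (d : ℝ)) ≤ 1 / 4 := by
      gcongr; linarith
    have hq0 : 0 < 1 / (4 * (d : ℝ)) := by positivity
    refine ⟨1 - 1 / (4 * d), by linarith, by linarith, ?_⟩
    have := one_add_mul_le_pow (a := - (1 / (4 * (d : ℝ)))) (by linarith) d
    have e : 1 + (d : ℝ) * -(1 / (4 * (d : ℝ))) = 3 / 4 := by field_simp; norm_num
    rw [e] at this
    rw [sub_eq_add_neg]; linarith
  have hr0 : 0 < r := by linarith
  have hc := cst_pos h1 d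
  refine ⟨cst r d / 3, by positivity, fun M f hf0 hf lam hl => ?_⟩
  set U := ∏ i, Polynomial.aeval (t i) (vv r M) with hU
  have hUD : DS (φ U) := DS.prod φ _ _ fun i _ => by
    rw [← Polynomial.aeval_algHom_apply]; exact (ht i).vv hr0.le h1.le M
  refine le_trans ?_ (hopf hUD f hf0 hf (lam := cst r d / 3 * lam) (by positivity)
    (⌊(r ^ M)⁻¹ / 3⌋₊ + 2))
  refine mul_le_mul_right (measure_mono_ae ?_) _
  have hall : ∀ᵐ x ∂μ, ∀ K : ℕ, K < M → cst r d * (r ^ K)⁻¹ * (φ (AV t fun _ => 2 ^ K) f).1 x ≤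
      ((∑ j ∈ Finset.range (⌊(r ^ K)⁻¹ / 3⌋₊ + 1 + 1), φ U ^ j) f).1 x := by
    rw [ae_all_iff]; intro K
    by_cases h : K < M
    · filter_upwards [dominate φ hd t ht h0 h1 hrd M K h f hf0] with x hx _; exact hx
    · exact ae_of_all _ fun x h' => absurd h' h
  filter_upwards [hall] with x hx
  rintro ⟨K, hK, hlt⟩
  refine ⟨⌊(r ^ K)⁻¹ / 3⌋₊ + 1, ?_, ?_⟩
  · have : ⌊(r ^ K)⁻¹ / 3⌋₊ ≤ ⌊(r ^ M)⁻¹ / 3⌋₊ := by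
      have hmono : (r ^ K)⁻¹ ≤ (r ^ M)⁻¹ :=
        inv_anti₀ (by positivity) (pow_le_pow_of_le_one hr0.le h1.le hK.le)
      gcongr
    omega
  · refine lt_of_lt_of_le ?_ (hx K hK)
    have h2 : (1 : ℝ) ≤ (r ^ K)⁻¹ := (one_le_inv₀ (by positivity)).2 (pow_le_one₀ hr0.le h1.le)
    have h3 : (⌊(r ^ K)⁻¹ / 3⌋₊ : ℝ) ≤ (r ^ K)⁻¹ / 3 := Nat.floor_le (by positivity)
    push_cast
    have h4 : (⌊(r ^ K)⁻¹ / 3⌋₊ : ℝ) + 1 + 1 ≤ 3 * (r ^ K)⁻¹ := by linarith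
    calc ((⌊(r ^ K)⁻¹ / 3⌋₊ : ℝ) + 1 + 1) * (cst r d / 3 * lam)
        ≤ 3 * (r ^ K)⁻¹ * (cst r d / 3 * lam) := by gcongr
      _ = cst r d * (r ^ K)⁻¹ * lam := by ring
      _ < _ := by gcongr

lemma sector_dom {μ : Measure Ω} {R : Type*} [CommRing R] [Algebra ℝ R]
    (φ : R →ₐ[ℝ] Module.End ℝ (EE μ)) {d : ℕ} (hd : 0 < d) (t : Fin d → R)
    (ht : ∀ i, DS (φ (t i))) (n : ℕ → Fin d → ℕ) (hsec : InSector n) :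
    ∃ c : ℝ, 0 < c ∧ ∀ k, ∃ K : ℕ, ∀ f : EE μ, (∀ᵐ x ∂μ, 0 ≤ f.1 x) →
      ∀ᵐ x ∂μ, (φ (AV t (n k)) f).1 x ≤ c * (φ (AV t fun _ => 2 ^ K) f).1 x := by
  have : Nonempty (Fin d) := ⟨⟨0, hd⟩⟩
  obtain ⟨c0, hc0⟩ := hsec
  refine ⟨(2 * |c0|) ^ d + 1, by positivity, fun k => ?_⟩
  by_cases hz : ∃ i, n k i = 0
  · obtain ⟨i, hi⟩ := hz
    refine ⟨0, fun f hf => ?_⟩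
    have : AV t (n k) = 0 := by
      rw [AV]; refine Finset.prod_eq_zero (Finset.mem_univ i) ?_
      rw [hi]; simp
    rw [this, map_zero, LinearMap.zero_apply]
    filter_upwards [E_zero (μ := μ), (DS.AV φ t ht fun _ => 2 ^ 0).pos f hf] with x h1 h2
    rw [h1]; exact mul_nonneg (by positivity) h2
  · push Not at hz
    obtain ⟨i0, hi0⟩ := Finite.exists_max (n k)
    refine ⟨(n k i0).size, fun f hf => ?_⟩
    set K := (n k i0).size with hK
    have hsz : (2 : ℝ) ^ K ≤ 2 * n k i0 := by
      have : 2 ^ K ≤ 2 * n k i0 := by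
        obtain ⟨l, hl⟩ := Nat.exists_eq_succ_of_ne_zero (Nat.size_pos.2 (Nat.pos_of_ne_zero (hz i0))).ne'
        have : 2 ^ l ≤ n k i0 := Nat.lt_size.1 (by omega)
        rw [hK, hl, Nat.succ_eq_add_one, pow_succ]; omega
      exact_mod_cast this
    have hni : ∀ i, (2 : ℝ) ^ K ≤ 2 * |c0| * n k i := by
      intro i
      have hpos : (0 : ℝ) < n k i := by exact_mod_cast Nat.pos_of_ne_zero (hz i)
      have h1 := (hc0 k i0 i (hz i)).trans (le_abs_self c0)
      rw [div_le_iff₀ hpos] at h1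
      linarith
    have hprod : ((2 : ℝ) ^ K) ^ d ≤ (2 * |c0|) ^ d * ∏ i, (n k i : ℝ) := by
      calc ((2 : ℝ) ^ K) ^ d = ∏ _i : Fin d, (2 : ℝ) ^ K := by simp
        _ ≤ ∏ i, (2 * |c0| * n k i) := Finset.prod_le_prod (fun _ _ => by positivity) fun i _ => hni i
        _ = _ := by rw [Finset.prod_mul_distrib]; simp
    have hPpos : 0 < ∏ i, (n k i : ℝ) :=
      Finset.prod_pos fun i _ => by exact_mod_cast Nat.pos_of_ne_zero (hz i)
    have hcoef : (∏ i, (n k i : ℝ))⁻¹ ≤ ((2 * |c0|) ^ d + 1) * (((2 : ℝ) ^ K) ^ d)⁻¹ := by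
      rw [← div_eq_mul_inv, le_div_iff₀ (by positivity), inv_mul_le_iff₀ hPpos]
      nlinarith
    classical
    set c := (2 * |c0|) ^ d + 1 with hc
    set cube : Finset (Fin d → ℕ) := Fintype.piFinset fun _ => Finset.range (2 ^ K) with hcube
    set sm : Finset (Fin d → ℕ) := Fintype.piFinset fun i => Finset.range (n k i) with hsm
    have hsub : sm ⊆ cube := Fintype.piFinset_subset _ _ fun i => Finset.range_mono
      ((hi0 i).trans (Nat.lt_size_self _).le)
    have halg : c • AV t (fun _ => 2 ^ K) = AV t (n k) + ∑ x ∈ cube,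
        (c * (((2 : ℝ) ^ K) ^ d)⁻¹ - if x ∈ sm then (∏ i, (n k i : ℝ))⁻¹ else 0) •
          ∏ i, t i ^ x i := by
      have e2 : AV t (n k) = ∑ x ∈ cube, (if x ∈ sm then (∏ i, (n k i : ℝ))⁻¹ else 0) •
          ∏ i, t i ^ x i := by
        rw [AV_eq, Finset.smul_sum]
        simp only [ite_smul, zero_smul]
        rw [Finset.sum_ite_mem, Finset.inter_eq_right.2 hsub]
      rw [e2, ← Finset.sum_add_distrib, AV_eq, smul_smul, Finset.smul_sum]
      refine Finset.sum_congr rfl fun x _ => ?_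
      rw [← add_smul]
      congr 1
      simp
    have hp := pos_comb cube (fun x => (c * (((2 : ℝ) ^ K) ^ d)⁻¹ -
        if x ∈ sm then (∏ i, (n k i : ℝ))⁻¹ else 0)) (fun x _ => by
          by_cases hx : x ∈ sm
          · simp only [if_pos hx]; linarith
          · simp only [if_neg hx]; rw [sub_zero]; positivity)
      (fun x => φ (∏ i, t i ^ x i) f) (fun x _ =>
        (DS.prod φ _ _ fun i _ => by rw [map_pow]; exact (ht i).pow _).pos f hf)
    have e1 := congrArg (fun z => φ z f) halg
    simp only [map_sum, map_add, map_smul, LinearMap.add_apply, LinearMap.sum_apply,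
      LinearMap.smul_apply] at e1
    have a1 := E_smul c (φ (AV t fun _ => 2 ^ K) f)
    rw [e1] at a1
    filter_upwards [a1, hp, E_add (φ (AV t (n k)) f) _] with x a1 a2 a3
    rw [← a1, a3]
    exact le_add_of_nonneg_right a2

lemma weak {μ : Measure Ω} [SigmaFinite μ] {R : Type*} [CommRing R] [Algebra ℝ R]
    (φ : R →ₐ[ℝ] Module.End ℝ (EE μ)) {d : ℕ} (hd : 0 < d) (t : Fin d → R)
    (ht : ∀ i, DS (φ (t i))) (n : ℕ → Fin d → ℕ) (hsec : InSector n) :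
    ∃ c : ℝ, 0 < c ∧ ∀ p : ℝ≥0∞, 1 ≤ p → p ≠ ∞ → ∀ f : EE μ, ∀ lam : ℝ, 0 < lam →
      ENNReal.ofReal lam ^ (p.toReal - 1) * (ENNReal.ofReal (c * lam) *
        μ {x | ∃ k, 2 * lam < |(φ (AV t (n k)) f).1 x|}) ≤ nm p f ^ p.toReal := by
  obtain ⟨C, hC, hdy⟩ := dyadic φ hd t ht
  obtain ⟨c, hc, hs⟩ := sector_dom φ hd t ht n hsec
  choose K hK using hs
  refine ⟨C / c, by positivity, fun p hp1 hp2 f lam hl => ?_⟩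
  by_cases hfin : nm p f = ∞
  · rw [hfin, ENNReal.top_rpow_of_pos (ENNReal.toReal_pos (lt_of_lt_of_le zero_lt_one hp1).ne' hp2)]
    exact le_top
  obtain ⟨a', b', hab, hb, ha⟩ := trunc hp1 hp2 f.1 hl
  have hq0 : 0 < ENNReal.ofReal lam ^ (p.toReal - 1) :=
    ENNReal.rpow_pos (by simpa using hl) ENNReal.ofReal_ne_top
  have ha1 : eLpNorm a' 1 μ ≠ ∞ := by
    intro h
    rw [h, ENNReal.mul_top hq0.ne'] at ha
    exact (ENNReal.rpow_lt_top_of_nonneg ENNReal.toReal_nonneg hfin).not_ge ha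
  set a : EE μ := ⟨a', mem_of_nrm le_rfl a' ha1⟩ with hadef
  set b : EE μ := ⟨b', mem_of_nrm le_top b' (hb.trans_lt ENNReal.ofReal_lt_top).ne⟩ with hbdef
  have hfab : f = a + b := Subtype.ext hab
  obtain ⟨u, hu, hun⟩ := ex_abs le_rfl a ha1
  have hu0 : ∀ᵐ x ∂μ, 0 ≤ u.1 x := by filter_upwards [hu] with x hx; rw [hx]; positivity
  refine le_trans (mul_le_mul_right ?_ _) ha
  change _ ≤ nm 1 a
  rw [← hun]
  have hpt : ∀ᵐ x ∂μ, ∀ k, |(φ (AV t (n k)) f).1 x| ≤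
      c * (φ (AV t fun _ => 2 ^ K k) u).1 x + lam := by
    rw [ae_all_iff]; intro k
    have hA := DS.AV φ t ht (n k)
    have h1 := hA.abs_le (f := a) (u := u) (by filter_upwards [hu] with x hx; rw [hx])
    have h2 : ∀ᵐ x ∂μ, |(φ (AV t (n k)) b).1 x| ≤ lam :=
      ae_of_nm_top hl.le ((hA.top b).trans hb)
    rw [hfab, map_add]
    filter_upwards [h1, h2, hK k u hu0, E_add (φ (AV t (n k)) a) (φ (AV t (n k)) b)]
      with x h1 h2 h3 h4
    rw [h4]
    exact (abs_add_le _ _).trans (by linarith)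
  have hun1 : nm 1 u ≠ ∞ := by rw [hun]; exact ha1
  set D : ℕ → Set Ω := fun M => {x | ∃ L < M, lam / c < (φ (AV t fun _ => 2 ^ L) u).1 x} with hD
  have hmono : Monotone D := by
    rintro M M' h x ⟨L, hL, hx⟩
    exact ⟨L, hL.trans_le h, hx⟩
  have hsubset : μ {x | ∃ k, 2 * lam < |(φ (AV t (n k)) f).1 x|} ≤ μ (⋃ M, D M) := by
    refine measure_mono_ae ?_
    filter_upwards [hpt] with x hx
    rintro ⟨k, hk⟩
    refine mem_iUnion.2 ⟨K k + 1, K k, Nat.lt_succ_self _, ?_⟩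
    rw [div_lt_iff₀ hc]
    have := hx k
    linarith
  refine (mul_le_mul_right hsubset _).trans ?_
  rw [hmono.measure_iUnion, ENNReal.mul_iSup]
  refine iSup_le fun M => ?_
  have := hdy M u hu0 hun1 (lam / c) (by positivity)
  rwa [show C / c * lam = C * (lam / c) by ring]

end DSAux

namespace DSAux

def Good {μ : Measure Ω} (A : ℕ → Module.End ℝ (EE μ)) (f : EE μ) : Prop :=
  ∀ ε : ℝ, 0 < ε → ∀ δ : ℝ, 0 < δ → ∃ B : Set Ω, μ B ≤ ENNReal.ofReal ε ∧ ∃ k0 : ℕ,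
    ∀ k, k0 ≤ k → ∀ l, k0 ≤ l → ∀ᵐ x ∂μ, x ∉ B → |(A k f).1 x - (A l f).1 x| ≤ δ

lemma Good.add {μ : Measure Ω} {A : ℕ → Module.End ℝ (EE μ)} {f g : EE μ}
    (hf : Good A f) (hg : Good A g) : Good A (f + g) := by
  intro ε hε δ hδ
  obtain ⟨B, hB, k0, h⟩ := hf (ε / 2) (by positivity) (δ / 2) (by positivity)
  obtain ⟨B', hB', k0', h'⟩ := hg (ε / 2) (by positivity) (δ / 2) (by positivity)
  refine ⟨B ∪ B', ?_, max k0 k0', ?_⟩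
  · refine (measure_union_le _ _).trans ((add_le_add hB hB').trans ?_)
    rw [← ENNReal.ofReal_add (by positivity) (by positivity)]
    simp
  · intro k hk l hl
    rw [map_add, map_add]
    filter_upwards [h k (by omega) l (by omega), h' k (by omega) l (by omega),
      E_add (A k f) (A k g), E_add (A l f) (A l g)] with x h1 h2 h3 h4 hx
    rw [h3, h4]
    have h1 := h1 (fun h => hx (Or.inl h))
    have h2 := h2 (fun h => hx (Or.inr h))
    rw [abs_le] at *
    constructor <;> linarith [h1.1, h1.2, h2.1, h2.2]

lemma Good.lim {μ : Measure Ω} {A : ℕ → Module.End ℝ (EE μ)} {p : ℝ≥0∞} (hp1 : 1 ≤ p)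
    (hp2 : p ≠ ∞) {c : ℝ} (hc : 0 < c) (hw : ∀ f : EE μ, ∀ lam : ℝ, 0 < lam →
      ENNReal.ofReal lam ^ (p.toReal - 1) * (ENNReal.ofReal (c * lam) *
        μ {x | ∃ k, 2 * lam < |(A k f).1 x|}) ≤ nm p f ^ p.toReal) {f : EE μ}
    (hf : ∀ η : ℝ≥0∞, η ≠ 0 → ∃ g, Good A g ∧ nm p (f - g) ≤ η) : Good A f := by
  intro ε hε δ hδ
  have hq : 0 < p.toReal := ENNReal.toReal_pos (zero_lt_one.trans_le hp1).ne' hp2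
  set lam := δ / 8 with hlam
  have hl : 0 < lam := by positivity
  set a := ENNReal.ofReal lam ^ (p.toReal - 1) * ENNReal.ofReal (c * lam) with ha
  have hla : ENNReal.ofReal lam ≠ 0 := by simpa using hl
  have ha0 : a ≠ 0 := by
    refine mul_ne_zero ?_ (by simp; positivity)
    rw [Ne, ENNReal.rpow_eq_zero_iff]
    push Not
    exact ⟨fun h => absurd h hla, fun h => absurd h ENNReal.ofReal_ne_top⟩
  have hat : a ≠ ∞ := by
    refine ENNReal.mul_ne_top ?_ ENNReal.ofReal_ne_top
    exact ENNReal.rpow_ne_top_of_ne_zero hla ENNReal.ofReal_ne_top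
  set η := (a * ENNReal.ofReal (ε / 2)) ^ (1 / p.toReal) with hη
  have hη0 : η ≠ 0 := by
    rw [hη, Ne, ENNReal.rpow_eq_zero_iff]
    push Not
    refine ⟨fun h => absurd h (mul_ne_zero ha0 (by simp; positivity)), fun h => absurd h
      (ENNReal.mul_ne_top hat ENNReal.ofReal_ne_top)⟩
  obtain ⟨g, hg, hfg⟩ := hf η hη0
  obtain ⟨B, hB, k0, h⟩ := hg (ε / 2) (by positivity) (δ / 2) (by positivity)
  set B' := {x | ∃ k, 2 * lam < |(A k (f - g)).1 x|} with hB'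
  have hmB' : μ B' ≤ ENNReal.ofReal (ε / 2) := by
    have h1 := hw (f - g) lam hl
    rw [← mul_assoc, ← ha] at h1
    have h2 : nm p (f - g) ^ p.toReal ≤ a * ENNReal.ofReal (ε / 2) := by
      refine (ENNReal.rpow_le_rpow hfg hq.le).trans (le_of_eq ?_)
      rw [hη, ← ENNReal.rpow_mul, one_div, inv_mul_cancel₀ hq.ne', ENNReal.rpow_one]
    exact (ENNReal.mul_le_mul_iff_right ha0 hat).1 (h1.trans h2)
  refine ⟨B ∪ B', ?_, k0, ?_⟩
  · refine (measure_union_le _ _).trans ((add_le_add hB hmB').trans ?_)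
    rw [← ENNReal.ofReal_add (by positivity) (by positivity)]
    simp
  · intro k hk l hl
    have e : ∀ k, ∀ᵐ x ∂μ, (A k (f - g)).1 x = (A k f).1 x - (A k g).1 x := fun k => by
      rw [map_sub]; exact E_sub _ _
    filter_upwards [h k hk l hl, e k, e l] with x h1 h3 h4 hx
    have h1 := h1 (fun h => hx (Or.inl h))
    have h2 : ∀ k, |(A k (f - g)).1 x| ≤ 2 * lam := by
      intro k
      by_contra hcon
      exact hx (Or.inr ⟨k, not_le.1 hcon⟩)
    have h5 := h2 k
    have h6 := h2 l
    rw [h3] at h5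
    rw [h4] at h6
    rw [abs_le] at *
    constructor <;> linarith [h1.1, h1.2, h5.1, h5.2, h6.1, h6.2]

lemma Good.unif {μ : Measure Ω} {A : ℕ → Module.End ℝ (EE μ)} {f g : EE μ}
    (h : ∀ δ : ℝ, 0 < δ → ∃ k0, ∀ k, k0 ≤ k → nm ⊤ (A k f - g) ≤ ENNReal.ofReal δ) : Good A f := by
  intro ε hε δ hδ
  obtain ⟨k0, h⟩ := h (δ / 2) (by positivity)
  refine ⟨∅, by simp, k0, fun k hk l hl => ?_⟩
  filter_upwards [ae_of_nm_top (by positivity) (h k hk), ae_of_nm_top (by positivity) (h l hl),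
    E_sub (A k f) g, E_sub (A l f) g] with x h1 h2 h3 h4 _
  rw [h3] at h1
  rw [h4] at h2
  rw [abs_le] at *
  constructor <;> linarith [h1.1, h1.2, h2.1, h2.2]

lemma good_inv {μ : Measure Ω} {R : Type*} [CommRing R] [Algebra ℝ R]
    (φ : R →ₐ[ℝ] Module.End ℝ (EE μ)) {d : ℕ} (t : Fin d → R)
    (n : ℕ → Fin d → ℕ) (hn : ∀ i, Tendsto (fun k => n k i) atTop atTop) {f : EE μ}
    (hf : ∀ i, φ (t i) f = f) : Good (fun k => φ (AV t (n k))) f := by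
  refine Good.unif (g := f) fun δ hδ => ?_
  have h1 : ∀ᶠ k in atTop, ∀ i, 1 ≤ n k i :=
    eventually_all.2 fun i => (hn i).eventually_ge_atTop 1
  obtain ⟨k0, hk0⟩ := eventually_atTop.1 h1
  refine ⟨k0, fun k hk => ?_⟩
  have : φ (AV t (n k)) f = f := by
    unfold AV
    refine Finset.prod_induction (fun i => ((n k i : ℝ)⁻¹ • ∑ m ∈ Finset.range (n k i), t i ^ m))
      (fun a => φ a f = f) ?_ ?_ ?_
    · intro a b ha hb
      rw [map_mul, Module.End.mul_apply, hb, ha]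
    · rw [map_one, Module.End.one_apply]
    · intro i _
      have hp : ∀ m, (φ (t i) ^ m) f = f := by
        intro m
        induction m with
        | zero => simp
        | succ m ih => rw [pow_succ, Module.End.mul_apply, hf, ih]
      have h0 : (n k i : ℝ) ≠ 0 := by
        have := hk0 k hk i
        positivity
      rw [map_smul, map_sum]
      simp only [map_pow, LinearMap.smul_apply, LinearMap.sum_apply, hp]
      rw [Finset.sum_const, Finset.card_range, ← Nat.cast_smul_eq_nsmul ℝ, smul_smul,
        inv_mul_cancel₀ h0, one_smul]
  simp only [this, sub_self]
  exact nm_top_le (c := δ) (by filter_upwards [E_zero (μ := μ)] with x hx; rw [hx]; simp [hδ.le])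

lemma good_cob {μ : Measure Ω} {R : Type*} [CommRing R] [Algebra ℝ R]
    (φ : R →ₐ[ℝ] Module.End ℝ (EE μ)) {d : ℕ} (t : Fin d → R) (ht : ∀ i, DS (φ (t i)))
    (n : ℕ → Fin d → ℕ) (hn : ∀ i, Tendsto (fun k => n k i) atTop atTop) {f : EE μ}
    (hf : nm ⊤ f ≠ ∞) (i : Fin d) : Good (fun k => φ (AV t (n k))) (f - φ (t i) f) := by
  obtain ⟨C, hC0, hC⟩ : ∃ C : ℝ, 0 ≤ C ∧ nm ⊤ f ≤ ENNReal.ofReal C :=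
    ⟨(nm ⊤ f).toReal, ENNReal.toReal_nonneg, by rw [ENNReal.ofReal_toReal hf]⟩
  refine Good.unif (g := 0) fun δ hδ => ?_
  obtain ⟨N, hN⟩ := exists_nat_gt (2 * C / δ)
  obtain ⟨k0, hk0⟩ := eventually_atTop.1 ((hn i).eventually_ge_atTop (N + 1))
  refine ⟨k0, fun k hk => ?_⟩
  have hk1 := hk0 k hk
  set P := ∏ j ∈ Finset.univ.erase i, ((n k j : ℝ)⁻¹ • ∑ m ∈ Finset.range (n k j), t j ^ m) with hP
  have hPD : DS (φ P) := by
    refine DS.prod φ _ _ fun i _ => ?_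
    rw [map_smul, map_sum]
    simp only [map_pow]
    exact (ht i).avg _
  have e : AV t (n k) * (1 - t i) = (n k i : ℝ)⁻¹ • (P * (1 - t i ^ n k i)) := by
    rw [AV, ← Finset.mul_prod_erase _ _ (Finset.mem_univ i), ← hP, ← geom_sum_mul_neg,
      smul_mul_assoc, smul_mul_assoc]
    congr 1
    ring
  have e2 : φ (AV t (n k)) (f - φ (t i) f)
      = (n k i : ℝ)⁻¹ • (φ P (f - φ (t i ^ n k i) f)) := by
    have := congrArg (fun a => φ a f) e
    simpa [map_mul, map_sub, map_smul] using this
  rw [sub_zero]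
  simp only [e2]
  have h1 := ae_of_nm_top hC0 hC
  have h2 := ae_of_nm_top hC0 ((((ht i).pow (n k i)).top f).trans hC)
  have h3 : nm ⊤ (f - φ (t i ^ n k i) f) ≤ ENNReal.ofReal (2 * C) := by
    apply nm_top_le
    rw [map_pow]
    filter_upwards [h1, h2, E_sub f ((φ (t i) ^ n k i) f)] with x h1 h2 h3
    rw [h3]
    rw [abs_le] at *
    constructor <;> linarith [h1.1, h1.2, h2.1, h2.2]
  have h4 := ae_of_nm_top (by positivity) ((hPD.top _).trans h3)
  apply nm_top_le
  filter_upwards [h4, E_smul (n k i : ℝ)⁻¹ (φ P (f - φ (t i ^ n k i) f))] with x h4 h5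
  rw [h5, abs_mul]
  have hnk : (N : ℝ) + 1 ≤ n k i := by exact_mod_cast hk1
  have hnp : (0 : ℝ) < n k i := lt_of_lt_of_le (by positivity) hnk
  rw [abs_of_pos (by positivity), inv_mul_le_iff₀ hnp]
  refine h4.trans ?_
  rw [div_lt_iff₀ hδ] at hN
  nlinarith

end DSAux

namespace DSAux

lemma Good.smul {μ : Measure Ω} {A : ℕ → Module.End ℝ (EE μ)} {f : EE μ} (c : ℝ)
    (hf : Good A f) : Good A (c • f) := by
  intro ε hε δ hδ
  obtain ⟨B, hB, k0, h⟩ := hf ε hε (δ / (|c| + 1)) (by positivity)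
  refine ⟨B, hB, k0, fun k hk l hl => ?_⟩
  rw [map_smul, map_smul]
  filter_upwards [h k hk l hl, E_smul c (A k f), E_smul c (A l f)] with x h1 h3 h4 hx
  have h1 := h1 hx
  rw [h3, h4, ← mul_sub, abs_mul]
  rw [le_div_iff₀ (by positivity)] at h1
  nlinarith [abs_nonneg ((A k f).1 x - (A l f).1 x)]

lemma Good.zero {μ : Measure Ω} {A : ℕ → Module.End ℝ (EE μ)} : Good A 0 := by
  refine Good.unif (g := 0) fun δ hδ => ⟨0, fun k _ => ?_⟩
  rw [map_zero, sub_zero]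
  exact nm_top_le (c := δ) (by filter_upwards [E_zero (μ := μ)] with x hx; rw [hx]; simp [hδ.le])

lemma approx {μ : Measure Ω} {p : ℝ≥0∞} (hp1 : 1 ≤ p) (hp2 : p ≠ ∞) (f : EE μ)
    (hf : nm p f ≠ ∞) {η : ℝ≥0∞} (hη : η ≠ 0) :
    ∃ s : EE μ, nm p (f - s) ≤ η ∧ nm ⊤ s ≠ ∞ ∧ nm 2 s ≠ ∞ ∧ nm p s ≠ ∞ := by
  have hm : MemLp f.1 p μ := ⟨f.1.aestronglyMeasurable, lt_top_iff_ne_top.2 hf⟩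
  obtain ⟨g, hg1, hg2⟩ := hm.exists_simpleFunc_eLpNorm_sub_lt hp2 hη
  obtain ⟨s, hs⟩ := exE hp1 hg2
  have hp0 : p ≠ 0 := (zero_lt_one.trans_le hp1).ne'
  have key : ∀ q, eLpNorm s.1 q μ = eLpNorm g q μ := fun q => eLpNorm_congr_ae hs
  refine ⟨s, ?_, ?_, ?_, ?_⟩
  · refine le_trans (le_of_eq ?_) hg1.le
    refine eLpNorm_congr_ae ?_
    filter_upwards [E_sub f s, hs] with x h1 h2
    rw [h1, h2]; rfl
  · unfold nm; rw [key]; exact (SimpleFunc.memLp_top g μ).2.ne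
  · unfold nm; rw [key]
    have := (SimpleFunc.memLp_iff hp0 hp2).1 hg2
    exact ((SimpleFunc.memLp_iff (by simp) (by simp)).2 this).2.ne
  · unfold nm; rw [key]; exact hg2.2.ne

noncomputable def inc {μ : Measure Ω} : Lp ℝ 2 μ →ₗ[ℝ] EE μ where
  toFun x := ⟨x.1, mem_of_nrm (p := 2) (by norm_num) x.1 (Lp.eLpNorm_lt_top x).ne⟩
  map_add' _ _ := rfl
  map_smul' _ _ := rfl

lemma nm_inc {μ : Measure Ω} (x : Lp ℝ 2 μ) : nm 2 (inc x) = ‖x‖ₑ := by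
  rw [Lp.enorm_def]; rfl

lemma inc_of {μ : Measure Ω} (f : EE μ) (hf : nm 2 f ≠ ∞) : ∃ x : Lp ℝ 2 μ, inc x = f :=
  ⟨⟨f.1, Lp.mem_Lp_iff_eLpNorm_lt_top.2 (lt_top_iff_ne_top.2 hf)⟩, rfl⟩

lemma good_L2 {μ : Measure Ω} [SigmaFinite μ] {R : Type*} [CommRing R] [Algebra ℝ R]
    (φ : R →ₐ[ℝ] Module.End ℝ (EE μ)) {d : ℕ} (hd : 0 < d) (t : Fin d → R)
    (ht : ∀ i, DS (φ (t i)))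
    (n : ℕ → Fin d → ℕ) (hn : ∀ i, Tendsto (fun k => n k i) atTop atTop) (hsec : InSector n)
    (f : EE μ) (hf : nm 2 f ≠ ∞) : Good (fun k => φ (AV t (n k))) f := by
  obtain ⟨c, hc, hw⟩ := weak φ hd t ht n hsec
  have hw2 := hw 2 (by norm_num) (by simp)
  set A := fun k => φ (AV t (n k)) with hA
  have cob : ∀ (i : Fin d) (y : EE μ), nm 2 y ≠ ∞ → Good A (y - φ (t i) y) := by
    intro i y hy
    refine Good.lim (p := 2) (by norm_num) (by simp) hc hw2 fun η hη => ?_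
    obtain ⟨s, h1, h2, h3, -⟩ := approx (p := 2) (by norm_num) (by simp) y hy
      (η := η / 2) (by simpa using hη)
    refine ⟨s - φ (t i) s, good_cob φ t ht n hn h2 i, ?_⟩
    by_cases hη2 : η = ∞
    · rw [hη2]; exact le_top
    have e : y - φ (t i) y - (s - φ (t i) s) = (y - s) + (-1 : ℝ) • φ (t i) (y - s) := by
      rw [map_sub]; module
    rw [e]
    have h4 : nm 2 (y - s) ≠ ∞ := (h1.trans_lt (ENNReal.div_lt_top hη2 (by simp))).ne
    have h5 := (ht i).Lp (p := 2) (by norm_num) (by simp) (y - s) h4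
    refine (nrm_add (by norm_num) _ _).trans ?_
    have h6 : nm 2 ((-1 : ℝ) • φ (t i) (y - s)) ≤ η / 2 := by
      refine (le_of_eq (nrm_smul (-1) (φ (t i) (y - s)).1)).trans ?_
      rw [abs_neg, abs_one, ENNReal.ofReal_one, one_mul]
      exact h5.trans h1
    exact (add_le_add h1 h6).trans (le_of_eq (ENNReal.add_halves η))
  let S : Submodule ℝ (Lp ℝ 2 μ) :=
    { carrier := {x | Good A (inc x)}
      add_mem' := fun {a b} ha hb => by
        change Good A (inc (a + b)); rw [map_add]; exact Good.add ha hb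
      zero_mem' := by change Good A (inc 0); rw [map_zero]; exact Good.zero
      smul_mem' := fun c x hx => by change Good A (inc (c • x)); rw [map_smul]; exact Good.smul c hx }
  have hS : S.topologicalClosure = ⊤ := by
    rw [Submodule.topologicalClosure_eq_top_iff, Submodule.eq_bot_iff]
    intro x hx
    have hx2 : nm 2 (inc x) ≠ ∞ := (Lp.eLpNorm_lt_top x).ne
    have hfix : ∀ i, φ (t i) (inc x) = inc x := by
      intro i
      have h5 := (ht i).Lp (p := 2) (by norm_num) (by simp) (inc x) hx2
      obtain ⟨y, hy⟩ := inc_of (φ (t i) (inc x)) (h5.trans_lt (lt_top_iff_ne_top.2 hx2)).ne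
      rw [← hy, nm_inc, nm_inc, enorm_le_iff_norm_le] at h5
      have hm : x - y ∈ S := by
        change Good A (inc (x - y))
        rw [map_sub, hy]
        exact cob i _ hx2
      have h6 := (Submodule.mem_orthogonal _ _).1 hx _ hm
      have h7 : ‖y - x‖ ^ 2 ≤ 0 := by
        rw [inner_sub_left, real_inner_self_eq_norm_sq] at h6
        rw [norm_sub_sq_real]
        nlinarith [norm_nonneg y, norm_nonneg x]
      have h8 : y = x := by
        have : ‖y - x‖ = 0 := by nlinarith [norm_nonneg (y - x)]
        exact sub_eq_zero.1 (norm_eq_zero.1 this)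
      rw [← hy, h8]
    have hm : x ∈ S := good_inv φ t n hn hfix
    exact inner_self_eq_zero.1 ((Submodule.mem_orthogonal _ _).1 hx _ hm)
  obtain ⟨x, rfl⟩ := inc_of f hf
  refine Good.lim (p := 2) (by norm_num) (by simp) hc hw2 fun η hη => ?_
  have hx : x ∈ closure (S : Set (Lp ℝ 2 μ)) := by
    have : x ∈ S.topologicalClosure := by rw [hS]; trivial
    exact this
  obtain ⟨y, hy, hxy⟩ := EMetric.mem_closure_iff.1 hx η (pos_iff_ne_zero.2 hη)
  refine ⟨inc y, hy, ?_⟩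
  rw [← map_sub, nm_inc, ← edist_eq_enorm_sub]
  exact hxy.le

lemma good_Lp {μ : Measure Ω} [SigmaFinite μ] {R : Type*} [CommRing R] [Algebra ℝ R]
    (φ : R →ₐ[ℝ] Module.End ℝ (EE μ)) {d : ℕ} (hd : 0 < d) (t : Fin d → R)
    (ht : ∀ i, DS (φ (t i)))
    (n : ℕ → Fin d → ℕ) (hn : ∀ i, Tendsto (fun k => n k i) atTop atTop) (hsec : InSector n)
    {p : ℝ≥0∞} (hp1 : 1 ≤ p) (hp2 : p ≠ ∞)
    (f : EE μ) (hf : nm p f ≠ ∞) : Good (fun k => φ (AV t (n k))) f := by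
  obtain ⟨c, hc, hw⟩ := weak φ hd t ht n hsec
  refine Good.lim hp1 hp2 hc (hw p hp1 hp2) fun η hη => ?_
  obtain ⟨s, h1, h2, h3, -⟩ := approx hp1 hp2 f hf hη
  exact ⟨s, good_L2 φ hd t ht n hn hsec s h3, h1⟩

end DSAux

namespace DSAux

lemma Good.step {μ : Measure Ω} {A : ℕ → Module.End ℝ (EE μ)} {f : EE μ} (hf : Good A f)
    (ε : ℝ) (hε : 0 < ε) : ∃ E : Set Ω, MeasurableSet E ∧ μ Eᶜ ≤ ENNReal.ofReal ε ∧
      ∀ δ : ℝ, 0 < δ → ∃ k0, ∀ k, k0 ≤ k → ∀ l, k0 ≤ l →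
        ∀ᵐ x ∂μ, x ∈ E → |(A k f).1 x - (A l f).1 x| ≤ δ := by
  obtain ⟨e, he, hes⟩ := ENNReal.exists_pos_sum_of_countable
    (ε := ENNReal.ofReal ε) (by simpa using hε) ℕ
  have := fun m : ℕ => hf (e m) (by exact_mod_cast he m) (1 / ((m : ℝ) + 1)) (by positivity)
  choose B hB k0 hk using this
  refine ⟨(toMeasurable μ (⋃ m, B m))ᶜ, (measurableSet_toMeasurable _ _).compl, ?_, ?_⟩
  · rw [compl_compl, measure_toMeasurable]
    refine (measure_iUnion_le _).trans (le_trans (ENNReal.tsum_le_tsum fun m => ?_) hes.le)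
    simpa using hB m
  · intro δ hδ
    obtain ⟨m, hm⟩ := exists_nat_one_div_lt hδ
    refine ⟨k0 m, fun k h1 l h2 => ?_⟩
    filter_upwards [hk m k h1 l h2] with x hx hxE
    refine (hx fun hb => hxE ?_).trans hm.le
    exact subset_toMeasurable _ _ (mem_iUnion.2 ⟨m, hb⟩)

lemma Good.au {μ : Measure Ω} {A : ℕ → Module.End ℝ (EE μ)} {f : EE μ} (hf : Good A f)
    {p : ℝ≥0∞} {C : ℝ≥0∞} (hC : C ≠ ∞) (hb : ∀ k, nm p (A k f) ≤ C) :
    ∃ fhat : Ω →ₘ[μ] ℝ, eLpNorm fhat p μ ≠ ∞ ∧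
      AuTendsto μ atTop (fun k => (A k f).1) fhat := by
  have hlim : ∀ᵐ x ∂μ, ∃ l, Tendsto (fun k => (A k f).1 x) atTop (𝓝 l) := by
    have := fun j : ℕ => hf.step (1 / ((j : ℝ) + 1)) (by positivity)
    choose E hE hmE hE2 using this
    have := fun (j m : ℕ) => hE2 j (1 / ((m : ℝ) + 1)) (by positivity)
    choose k0 hk using this
    have h1 : ∀ᵐ x ∂μ, ∃ j, x ∈ E j := by
      rw [ae_iff]
      refine le_antisymm ?_ bot_le
      refine ge_of_tendsto (f := fun j : ℕ => ENNReal.ofReal (1 / ((j : ℝ) + 1)))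
        (x := atTop) ?_ (Eventually.of_forall fun j => ?_)
      · rw [← ENNReal.ofReal_zero]
        exact ENNReal.tendsto_ofReal tendsto_one_div_add_atTop_nhds_zero_nat
      · refine (measure_mono ?_).trans (hmE j)
        intro x hx hxE
        exact hx ⟨j, hxE⟩
    have h2 : ∀ᵐ x ∂μ, ∀ j m k, k0 j m ≤ k → ∀ l, k0 j m ≤ l → x ∈ E j →
        |(A k f).1 x - (A l f).1 x| ≤ 1 / ((m : ℝ) + 1) := by
      refine ae_all_iff.2 fun j => ae_all_iff.2 fun m => ae_all_iff.2 fun k => ?_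
      by_cases h : k0 j m ≤ k
      · refine (ae_all_iff.2 fun l => ?_ : ∀ᵐ x ∂μ, ∀ l, k0 j m ≤ l → x ∈ E j →
          |(A k f).1 x - (A l f).1 x| ≤ 1 / ((m : ℝ) + 1)).mono fun x hx _ => hx
        by_cases h' : k0 j m ≤ l
        · exact (hk j m k h l h').mono fun x hx _ => hx
        · exact Eventually.of_forall fun x hx => absurd hx h'
      · exact Eventually.of_forall fun x hx => absurd hx h
    filter_upwards [h1, h2] with x ⟨j, hj⟩ h2
    refine cauchySeq_tendsto_of_complete (Metric.cauchySeq_iff.2 fun δ hδ => ?_)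
    obtain ⟨m, hm⟩ := exists_nat_one_div_lt hδ
    refine ⟨k0 j m, fun k h3 l h4 => ?_⟩
    rw [Real.dist_eq]
    exact (h2 j m k h3 l h4 hj).trans_lt hm
  obtain ⟨g, hg, hgt⟩ := exists_stronglyMeasurable_limit_of_tendsto_ae
    (fun k => (A k f).1.aestronglyMeasurable) hlim
  have hmk : (AEEqFun.mk g hg.aestronglyMeasurable : Ω →ₘ[μ] ℝ) =ᵐ[μ] g := AEEqFun.coeFn_mk _ _
  refine ⟨AEEqFun.mk g hg.aestronglyMeasurable, ?_, ?_⟩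
  · rw [eLpNorm_congr_ae hmk]
    refine ne_top_of_le_ne_top hC ((Lp.eLpNorm_lim_le_liminf_eLpNorm
      (fun k => (A k f).1.aestronglyMeasurable) g hgt).trans ?_)
    exact Filter.liminf_le_of_frequently_le' (Frequently.of_forall fun k => hb k)
  · intro ε hε
    obtain ⟨E, hE, hmE, hE2⟩ := hf.step ε hε
    refine ⟨E, hE, hmE, ENNReal.tendsto_nhds_zero.2 fun η hη => ?_⟩
    by_cases hη2 : η = ∞
    · exact Eventually.of_forall fun _ => by rw [hη2]; exact le_top
    obtain ⟨k0, hk⟩ := hE2 η.toReal (ENNReal.toReal_pos hη.ne' hη2)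
    filter_upwards [eventually_ge_atTop k0] with k hkk
    rw [eLpNorm_exponent_top, ← ENNReal.ofReal_toReal hη2]
    refine eLpNormEssSup_le_of_ae_bound ?_
    have h2 : ∀ᵐ x ∂μ, ∀ l, k0 ≤ l → x ∈ E →
        |(A k f).1 x - (A l f).1 x| ≤ η.toReal := by
      refine ae_all_iff.2 fun l => ?_
      by_cases h' : k0 ≤ l
      · exact (hk k hkk l h').mono fun x hx _ => hx
      · exact Eventually.of_forall fun x hx => absurd hx h'
    filter_upwards [h2, hgt, hmk, AEEqFun.coeFn_sub (A k f).1
      (AEEqFun.mk g hg.aestronglyMeasurable)] with x h3 h4 h5 h6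
    by_cases hx : x ∈ E
    · rw [indicator_of_mem hx, h6, Pi.sub_apply, h5, Real.norm_eq_abs]
      refine le_of_tendsto ((tendsto_const_nhds.sub h4).abs) ?_
      filter_upwards [eventually_ge_atTop k0] with l hl
      exact h3 l hl hx
    · rw [indicator_of_notMem hx]; simp

noncomputable def tau {μ : Measure Ω} {T : (Ω →ₘ[μ] ℝ) → (Ω →ₘ[μ] ℝ)} (hT : IsPosDS μ T) :
    Module.End ℝ (EE μ) where
  toFun f := ⟨T f.1, by
    obtain ⟨g, h, hg, hh, e⟩ := f.2
    have mg := mem_of_nrm le_rfl g hg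
    have mh := mem_of_nrm (p := ⊤) le_top h hh
    refine ⟨T g, T h, ?_, ?_, ?_⟩
    · exact ne_top_of_le_ne_top hg (hT.norm_one g mg)
    · exact ne_top_of_le_ne_top hh (hT.norm_top h mh)
    · rw [e, hT.map_add g h mg mh]⟩
  map_add' f g := Subtype.ext (hT.map_add f.1 g.1 f.2 g.2)
  map_smul' c f := Subtype.ext (hT.map_smul c f.1 f.2)

lemma tau_DS {μ : Measure Ω} {T : (Ω →ₘ[μ] ℝ) → (Ω →ₘ[μ] ℝ)} (hT : IsPosDS μ T) :
    DS (tau hT) :=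
  ⟨fun f h => (nonneg_iff _).1 (hT.map_pos f.1 f.2 ((nonneg_iff _).2 h)),
    fun f => hT.norm_one f.1 f.2, fun f => hT.norm_top f.1 f.2⟩

lemma tau_iter {μ : Measure Ω} {T : (Ω →ₘ[μ] ℝ) → (Ω →ₘ[μ] ℝ)} (hT : IsPosDS μ T) (k : ℕ)
    (F : EE μ) : ((tau hT ^ k) F).1 = T^[k] F.1 := by
  induction k with
  | zero => rfl
  | succ k ih =>
    rw [pow_succ', Module.End.mul_apply, Function.iterate_succ_apply', ← ih]
    rfl

lemma iter_eq {μ : Measure Ω} {d : ℕ} (T : Fin d → (Ω →ₘ[μ] ℝ) → (Ω →ₘ[μ] ℝ))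
    (hT : ∀ i, IsPosDS μ (T i)) (k : Fin d → ℕ) (F : EE μ) :
    iterComp T k F.1 = ((List.ofFn fun i => tau (hT i) ^ k i).prod F).1 := by
  induction d with
  | zero => simp [iterComp]
  | succ d ih =>
    have := ih (fun i => T i.succ) (fun i => hT i.succ) (fun i => k i.succ)
    rw [List.ofFn_succ, List.prod_cons, Module.End.mul_apply, tau_iter, ← this]
    unfold iterComp
    rw [List.ofFn_succ]
    rfl

lemma ex_comm.{u} {A : Type u} [Ring A] [Algebra ℝ A] {ι : Type} (a : ι → A)
    (hc : ∀ i j, a i * a j = a j * a i) :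
    ∃ (R : Type u) (_ : CommRing R) (_ : Algebra ℝ R) (φ : R →ₐ[ℝ] A) (t : ι → R),
      ∀ i, φ (t i) = a i := by
  have : IsMulCommutative (Algebra.adjoin ℝ (Set.range a)) :=
    Algebra.isMulCommutative_adjoin ℝ (by
      rintro _ ⟨i, rfl⟩ _ ⟨j, rfl⟩
      exact hc i j)
  exact ⟨Algebra.adjoin ℝ (Set.range a), { (inferInstance : Ring (Algebra.adjoin ℝ (Set.range a))) with
      mul_comm := fun x y => this.is_comm.comm x y }, inferInstance,
    (Algebra.adjoin ℝ (Set.range a)).val,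
    fun i => ⟨a i, Algebra.subset_adjoin ⟨i, rfl⟩⟩, fun i => rfl⟩

theorem final (μ : Measure Ω) [SigmaFinite μ] {d : ℕ}
    (T : Fin d → (Ω →ₘ[μ] ℝ) → (Ω →ₘ[μ] ℝ)) (hT : ∀ i, IsPosDS μ (T i))
    (hcomm : ∀ i j, ∀ f : Ω →ₘ[μ] ℝ, MemL1pLinf μ f → T i (T j f) = T j (T i f))
    (p : ℝ≥0∞) (hp1 : 1 ≤ p) (hp2 : p ≠ ∞)
    (f : Ω →ₘ[μ] ℝ) (hf : eLpNorm f p μ ≠ ∞)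
    (n : ℕ → Fin d → ℕ) (hn : ∀ i, Tendsto (fun k => n k i) atTop atTop)
    (hsec : InSector n) :
    ∃ fhat : Ω →ₘ[μ] ℝ, eLpNorm fhat p μ ≠ ∞ ∧
      AuTendsto μ atTop (fun k => multiAvg μ T (n k) f) fhat := by
  rcases Nat.eq_zero_or_pos d with rfl | hd
  · refine ⟨f, hf, fun ε hε => ⟨univ, MeasurableSet.univ, by simp, ?_⟩⟩
    have : ∀ k, multiAvg μ T (n k) f = f := by
      intro k
      simp [multiAvg, iterComp]
    simp only [this, sub_self, indicator_univ]
    rw [nrm_zero]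
    exact tendsto_const_nhds
  · have hc : ∀ a ∈ Set.range (fun i => tau (hT i)), ∀ b ∈ Set.range (fun i => tau (hT i)),
        a * b = b * a := by
      rintro _ ⟨i, rfl⟩ _ ⟨j, rfl⟩
      exact LinearMap.ext fun F => Subtype.ext (hcomm i j F.1 F.2)
    obtain ⟨R, _, _, φ, t, hφ⟩ := ex_comm (fun i => tau (hT i))
      (fun i j => hc _ ⟨i, rfl⟩ _ ⟨j, rfl⟩)
    have ht : ∀ i, DS (φ (t i)) := fun i => by rw [hφ]; exact tau_DS (hT i)
    let F : EE μ := ⟨f, mem_of_nrm hp1 f hf⟩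
    have hg := good_Lp φ hd t ht n hn hsec hp1 hp2 F hf
    obtain ⟨fhat, h1, h2⟩ := hg.au hf fun k => (DS.AV φ t ht (n k)).Lp hp1 hp2 F hf
    refine ⟨fhat, h1, ?_⟩
    have : ∀ k, multiAvg μ T (n k) f = (φ (AV t (n k)) F).1 := by
      intro k
      rw [AV_eq, map_smul, map_sum, LinearMap.smul_apply, LinearMap.sum_apply, multiAvg]
      rw [Submodule.coe_smul, Submodule.coe_sum]
      congr 1
      refine Finset.sum_congr rfl fun m _ => ?_
      have e : φ (∏ i, t i ^ m i) = (List.ofFn fun i => tau (hT i) ^ m i).prod := by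
        rw [← List.prod_ofFn, map_list_prod, List.map_ofFn]
        congr 2
        funext i
        simp [hφ]
      rw [e]
      exact iter_eq T hT m F
    simp only [this]
    exact h2

end DSAux

/-- **Commutative case of Corollary 5.9**: for a commuting family of positive
Dunford–Schwartz operators `T₁,…,T_d` on a σ-finite measure space, `1 ≤ p < ∞`,
`f ∈ L^p(μ)`, and any sequence `n(k) → ∞` remaining in a sector of `ℕ^d`, the averages
`A_{n(k)}(f)` converge almost uniformly to some `f̂ ∈ L^p(μ)`. -/
theorem multiparam_sector_au_Lp (μ : Measure Ω) [SigmaFinite μ] {d : ℕ}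
    (T : Fin d → (Ω →ₘ[μ] ℝ) → (Ω →ₘ[μ] ℝ)) (hT : ∀ i, IsPosDS μ (T i))
    (hcomm : ∀ i j, ∀ f : Ω →ₘ[μ] ℝ, MemL1pLinf μ f → T i (T j f) = T j (T i f))
    (p : ℝ≥0∞) (hp1 : 1 ≤ p) (hp2 : p ≠ ∞)
    (f : Ω →ₘ[μ] ℝ) (hf : eLpNorm f p μ ≠ ∞)
    (n : ℕ → Fin d → ℕ) (hn : ∀ i, Tendsto (fun k => n k i) atTop atTop)
    (hsec : InSector n) :
    ∃ fhat : Ω →ₘ[μ] ℝ, eLpNorm fhat p μ ≠ ∞ ∧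
      AuTendsto μ atTop (fun k => multiAvg μ T (n k) f) fhat := by
  exact DSAux.final μ T hT hcomm p hp1 hp2 f hf n hn hsec
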